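/- The assignment σ ↦ T_σ := ⊕_{(s,t) ∈ σ} (s,t) gives a one-to-one correspondence between the set of triangulations of the convex n-gon and the set of isomorphism classes of basic cluster tilting objects in the category of Cohen–Macaulay Λ-modules. -/

import Mathlib

set_option synthInstance.maxHeartbeats 1000000
set_option maxHeartbeats 1000000

open Polynomial Matrix

noncomputable section

/-- The exponent `c_{ij}` (with 0-based indices `i j : Fin n`, corresponding to the 1-based
`c_{i+1,j+1} = δ_{i+1>j+1} + δ_{i+1>j+2} − δ_{(i+1,j+1)=(1,n)}`). -/
def cExp (n : ℕ) (i j : Fin n) : ℤ :=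
  (if (j : ℕ) < (i : ℕ) then 1 else 0) + (if (j : ℕ) + 1 < (i : ℕ) then 1 else 0)
    - (if (i : ℕ) = 0 ∧ (j : ℕ) = n - 1 then 1 else 0)

/-- The subset `x^c · K[x]` of `K(x)`. -/
def xPow (K : Type*) [Field K] (c : ℤ) : Set (RatFunc K) :=
  {f | ∃ p : Polynomial K, f = RatFunc.X ^ c * algebraMap (Polynomial K) (RatFunc K) p}

/-- The carrier set of the tiled order `Λ ⊆ M_n(K(x))`:
matrices whose `(i,j)` entry lies in `x^{c_{ij}}·K[x]`. -/
def lambdaCarrier (K : Type*) [Field K] (n : ℕ) : Set (Matrix (Fin n) (Fin n) (RatFunc K)) :=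
  {M | ∀ i j, M i j ∈ xPow K (cExp n i j)}

/-- Exponent pattern of the module `(i,j)` (1-based `i j`; `k : ℕ` is a 0-based coordinate,
so the 1-based coordinate is `k+1`): `0` for `k+1 ≤ i`, `1` for `i < k+1 ≤ j`, `2` otherwise. -/
def dExp (i j k : ℕ) : ℤ := if k + 1 ≤ i then 0 else if k + 1 ≤ j then 1 else 2

/-- The carrier set of the `Λ`-module `(i,j)` inside the column space `K(x)^n`. -/
def ijSet (K : Type*) [Field K] (n : ℕ) (i j : ℕ) : Set (Fin n → RatFunc K) :=
  {v | ∀ k : Fin n, v k ∈ xPow K (dExp i j (k : ℕ))}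

/-- Column vectors form a module over the matrix ring via `mulVec`. -/
instance matVecModule (K : Type*) [Field K] (n : ℕ) :
    Module (Matrix (Fin n) (Fin n) (RatFunc K)) (Fin n → RatFunc K) where
  smul M v := M.mulVec v
  one_smul v := Matrix.one_mulVec v
  mul_smul M N v := (Matrix.mulVec_mulVec v M N).symm
  smul_zero M := Matrix.mulVec_zero M
  smul_add M u v := Matrix.mulVec_add M u v
  add_smul M N v := Matrix.add_mulVec M N v
  zero_smul v := Matrix.zero_mulVec v

section ClusterTilting

variable {K : Type} [Field K] {n : ℕ}
variable (Λ : Subalgebra (Polynomial K) (Matrix (Fin n) (Fin n) (RatFunc K)))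

/-- A `Λ`-module is Cohen–Macaulay if it is finitely generated and torsion-free over `K[x]`,
where `K[x]` acts through the central embedding `K[x] → Λ`. -/
def IsCMMod (M : Type) [AddCommGroup M] [Module ↥Λ M] : Prop :=
  letI : Module (Polynomial K) M := Module.compHom M (algebraMap (Polynomial K) ↥Λ)
  Module.Finite (Polynomial K) M ∧ NoZeroSMulDivisors (Polynomial K) M

/-- Every short exact sequence of `Λ`-modules `0 → Z → B → W → 0` splits. -/
def SplitsExt (Z W : Type) [AddCommGroup Z] [Module ↥Λ Z]
    [AddCommGroup W] [Module ↥Λ W] : Prop :=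
  ∀ (B : ModuleCat.{0} ↥Λ) (f : Z →ₗ[↥Λ] B) (g : B →ₗ[↥Λ] W),
    Function.Injective f → Function.Surjective g → LinearMap.range f = LinearMap.ker g →
    ∃ sec : W →ₗ[↥Λ] B, g ∘ₗ sec = LinearMap.id

/-- `Z` belongs to `add T`: `Z` is isomorphic to a direct summand of a finite direct sum of
copies of `T`. -/
def InAdd (T Z : Type) [AddCommGroup T] [Module ↥Λ T] [AddCommGroup Z] [Module ↥Λ Z] : Prop :=
  ∃ (m : ℕ) (W : ModuleCat.{0} ↥Λ), Nonempty ((Fin m → T) ≃ₗ[↥Λ] (Z × W))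

/-- `T` is a cluster tilting object of `CM(Λ)`:
`T` is Cohen–Macaulay and, for every Cohen–Macaulay `Λ`-module `Z`,
`add T = {Z : Ext¹(T,Z) = 0} = {Z : Ext¹(Z,T) = 0}`, Ext-vanishing being expressed by the
splitting of all short exact sequences. -/
def IsClusterTilting (T : Type) [AddCommGroup T] [Module ↥Λ T] : Prop :=
  IsCMMod Λ T ∧
  ∀ Z : ModuleCat.{0} ↥Λ, IsCMMod Λ Z →
    ((InAdd Λ T Z ↔ SplitsExt Λ Z T) ∧ (InAdd Λ T Z ↔ SplitsExt Λ T Z))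

/-- `T` is basic: no two of its indecomposable direct summands are isomorphic, i.e. `T` has no
direct summand of the form `A ⊕ A` with `A` nonzero. -/
def IsBasic (T : Type) [AddCommGroup T] [Module ↥Λ T] : Prop :=
  ¬ ∃ (A B : ModuleCat.{0} ↥Λ), Nontrivial A ∧ Nonempty (T ≃ₗ[↥Λ] (A × A × B))

/-- The module `T_σ = ⊕_{(s,t) ∈ σ} (s,t)` attached to a set `σ` of pairs. -/
abbrev TModOf (E : ℕ → ℕ → Submodule ↥Λ (Fin n → RatFunc K)) (σ : Finset (ℕ × ℕ)) : Type :=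
  ∀ p : {x : ℕ × ℕ // x ∈ σ}, ↥(E p.1.1 p.1.2)

end ClusterTilting

/-- `p` is a side of the convex `n`-gon. -/
def IsSide (n : ℕ) (p : ℕ × ℕ) : Prop :=
  (1 ≤ p.1 ∧ p.2 = p.1 + 1 ∧ p.2 ≤ n) ∨ (p.1 = 1 ∧ p.2 = n)

/-- Two pairs (diagonals) cross. -/
def Crossing (p q : ℕ × ℕ) : Prop :=
  (p.1 < q.1 ∧ q.1 < p.2 ∧ p.2 < q.2) ∨ (q.1 < p.1 ∧ p.1 < q.2 ∧ q.2 < p.2)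

/-- `σ` is a triangulation of the convex `n`-gon: it consists of sides and diagonals, contains
all `n` sides, its elements are pairwise non-crossing, and it is maximal with this property. -/
def IsTriangulation (n : ℕ) (σ : Finset (ℕ × ℕ)) : Prop :=
  (∀ p ∈ σ, 1 ≤ p.1 ∧ p.1 < p.2 ∧ p.2 ≤ n) ∧
  (∀ p : ℕ × ℕ, IsSide n p → p ∈ σ) ∧
  (∀ p ∈ σ, ∀ q ∈ σ, ¬ Crossing p q) ∧
  (∀ p : ℕ × ℕ, 1 ≤ p.1 → p.1 < p.2 → p.2 ≤ n → (∀ q ∈ σ, ¬ Crossing p q) → p ∈ σ)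

namespace PolygonOrder

open Finset

variable {K : Type} [Field K] {n : ℕ}

theorem zero_mem_xPow (c : ℤ) : (0 : RatFunc K) ∈ xPow K c := ⟨0, by simp⟩

theorem add_mem_xPow {c : ℤ} {f g : RatFunc K} (hf : f ∈ xPow K c) (hg : g ∈ xPow K c) :
    f + g ∈ xPow K c := by
  obtain ⟨p, rfl⟩ := hf
  obtain ⟨q, rfl⟩ := hg
  exact ⟨p + q, by rw [map_add]; ring⟩

theorem sum_mem_xPow {ι : Type*} (s : Finset ι) {c : ℤ} {f : ι → RatFunc K}
    (hf : ∀ i ∈ s, f i ∈ xPow K c) : ∑ i ∈ s, f i ∈ xPow K c := by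
  classical
  induction s using Finset.induction_on with
  | empty => exact zero_mem_xPow c
  | insert a s ha ih =>
    rw [sum_insert ha]
    exact add_mem_xPow (hf a (mem_insert_self a s)) (ih fun i hi => hf i (mem_insert_of_mem hi))

theorem mul_mem_xPow {a b c : ℤ} (h : c ≤ a + b) {f g : RatFunc K} (hf : f ∈ xPow K a)
    (hg : g ∈ xPow K b) : f * g ∈ xPow K c := by
  obtain ⟨p, rfl⟩ := hf
  obtain ⟨q, rfl⟩ := hg
  have h1 : (RatFunc.X : RatFunc K) ≠ 0 := RatFunc.X_ne_zero
  refine ⟨X ^ (a + b - c).toNat * (p * q), ?_⟩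
  rw [map_mul, map_mul, map_pow, RatFunc.algebraMap_X, ← mul_assoc (RatFunc.X ^ c),
    ← zpow_natCast, ← zpow_add₀ h1, Int.toNat_of_nonneg (by omega),
    show c + (a + b - c) = a + b by ring, zpow_add₀ h1]
  ring

theorem zpow_mem_xPow {a c : ℤ} (h : c ≤ a) : (RatFunc.X : RatFunc K) ^ a ∈ xPow K c := by
  have h2 : (1 : RatFunc K) ∈ xPow K 0 := ⟨1, by simp⟩
  simpa using mul_mem_xPow (c := c) (by omega)
    (show RatFunc.X ^ a ∈ xPow K a from ⟨1, by simp⟩) h2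

theorem X_mul_mem_xPow {c : ℤ} (h : -1 ≤ c) {f : RatFunc K} (hf : f ∈ xPow K c) :
    ∃ p : K[X], RatFunc.X * f = algebraMap K[X] (RatFunc K) p := by
  have h1 : (RatFunc.X : RatFunc K) ∈ xPow K 1 := ⟨1, by simp⟩
  obtain ⟨p, hp⟩ := mul_mem_xPow (c := 0) (by omega) h1 hf
  exact ⟨p, by simpa using hp⟩

/-- Natural number version of the exponent pattern `dExp`. -/
def depth (i j k : ℕ) : ℕ := if k < i then 0 else if k < j then 1 else 2

theorem dExp_eq_depth (i j k : ℕ) : dExp i j k = depth i j k := by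
  simp only [dExp, depth, Nat.succ_le_iff]
  split_ifs <;> rfl

theorem mem_xPow_natCast {m : ℕ} {f : RatFunc K} :
    f ∈ xPow K m ↔ ∃ p : K[X], f = algebraMap K[X] (RatFunc K) (X ^ m * p) := by
  simp [xPow]

theorem mem_ijSet {i j : ℕ} {v : Fin n → RatFunc K} :
    v ∈ ijSet K n i j ↔
      ∀ k : Fin n, ∃ p : K[X], v k = algebraMap K[X] (RatFunc K) (X ^ depth i j k * p) := by
  simp only [ijSet, Set.mem_ofPred_eq, dExp_eq_depth, mem_xPow_natCast]

section Order

variable {Λ : Subalgebra K[X] (Matrix (Fin n) (Fin n) (RatFunc K))}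

theorem single_mem (hΛ : (Λ : Set (Matrix (Fin n) (Fin n) (RatFunc K))) = lambdaCarrier K n)
    (i j : Fin n) {f : RatFunc K} (hf : f ∈ xPow K (cExp n i j)) : Matrix.single i j f ∈ Λ := by
  rw [← SetLike.mem_coe, hΛ]
  intro a b
  by_cases h : i = a ∧ j = b
  · obtain ⟨rfl, rfl⟩ := h
    simpa using hf
  · rw [Matrix.single_apply, if_neg h]
    exact zero_mem_xPow _

/-- The `k`-th matrix unit of the first row for `k < n`, and `x²` times the first diagonal
matrix unit for `k ≥ n`. -/
def rowMatrix (K : Type) [Field K] (hn : 3 ≤ n) (k : ℕ) : Matrix (Fin n) (Fin n) (RatFunc K) :=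
  if h : k < n then Matrix.single ⟨0, by omega⟩ ⟨k, h⟩ 1
  else Matrix.single ⟨0, by omega⟩ ⟨0, by omega⟩ (RatFunc.X ^ 2)

variable (hΛ : (Λ : Set (Matrix (Fin n) (Fin n) (RatFunc K))) = lambdaCarrier K n) (hn : 3 ≤ n)

include hΛ in
theorem rowMatrix_mem (k : ℕ) : rowMatrix K hn k ∈ Λ := by
  unfold rowMatrix
  split_ifs with h
  · refine single_mem hΛ _ _ ?_
    rw [← zpow_zero RatFunc.X]
    refine zpow_mem_xPow ?_
    simp only [cExp]
    split_ifs <;> simp_all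
  · refine single_mem hΛ _ _ ?_
    rw [← zpow_natCast]
    refine zpow_mem_xPow ?_
    simp only [cExp]
    split_ifs <;> simp_all

/-- `rowMatrix` as an element of `Λ`. -/
def row (k : ℕ) : Λ := ⟨rowMatrix K hn k, rowMatrix_mem hΛ hn k⟩

theorem coe_row_lt {k : ℕ} (h : k < n) :
    (row hΛ hn k : Matrix (Fin n) (Fin n) (RatFunc K)) =
      Matrix.single ⟨0, by omega⟩ ⟨k, h⟩ 1 := by
  simp [row, rowMatrix, h]

theorem row_self : row hΛ hn n = (X ^ 2 : K[X]) • row hΛ hn 0 := by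
  apply Subtype.ext
  have h : 0 < n := by omega
  rw [Subalgebra.coe_smul, coe_row_lt hΛ hn h, Matrix.smul_single]
  simp [row, rowMatrix, Algebra.smul_def]

theorem row_zero_mul (k : ℕ) : row hΛ hn 0 * row hΛ hn k = row hΛ hn k := by
  apply Subtype.ext
  have h : 0 < n := by omega
  rw [Subalgebra.coe_mul, coe_row_lt hΛ hn h]
  simp only [row, rowMatrix]
  split_ifs <;> simp

theorem row_succ {k : ℕ} (h : k < n) : ∃ a : Λ, row hΛ hn (k + 1) = row hΛ hn k * a := by
  by_cases h' : k + 1 < n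
  · refine ⟨⟨Matrix.single ⟨k, h⟩ ⟨k + 1, h'⟩ 1, single_mem hΛ _ _ ?_⟩, Subtype.ext ?_⟩
    · rw [← zpow_zero RatFunc.X]
      refine zpow_mem_xPow ?_
      simp only [cExp]
      split_ifs <;> omega
    · rw [Subalgebra.coe_mul, coe_row_lt hΛ hn h, coe_row_lt hΛ hn h']
      simp
  · refine ⟨⟨Matrix.single ⟨k, h⟩ ⟨0, by omega⟩ (RatFunc.X ^ 2), single_mem hΛ _ _ ?_⟩,
      Subtype.ext ?_⟩
    · rw [← zpow_natCast]
      refine zpow_mem_xPow ?_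
      simp only [cExp]
      split_ifs <;> push_cast
    · rw [Subalgebra.coe_mul, coe_row_lt hΛ hn h]
      simp [row, rowMatrix, h']

theorem X_smul_row {k : ℕ} (h : k < n) :
    ∃ a : Λ, (X : K[X]) • row hΛ hn k = row hΛ hn (k + 1) * a := by
  by_cases h' : k + 1 < n
  · refine ⟨⟨Matrix.single ⟨k + 1, h'⟩ ⟨k, h⟩ RatFunc.X, single_mem hΛ _ _ ?_⟩, Subtype.ext ?_⟩
    · rw [← zpow_one RatFunc.X]
      refine zpow_mem_xPow ?_
      simp only [cExp]
      split_ifs <;> simp_all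
    · rw [Subalgebra.coe_mul, Subalgebra.coe_smul, coe_row_lt hΛ hn h, coe_row_lt hΛ hn h',
        Matrix.smul_single]
      simp [Algebra.smul_def]
  · refine ⟨⟨Matrix.single ⟨0, by omega⟩ ⟨k, h⟩ (RatFunc.X ^ (-1 : ℤ)), single_mem hΛ _ _ ?_⟩,
      Subtype.ext ?_⟩
    · refine zpow_mem_xPow ?_
      have hk : k = n - 1 := by omega
      have : n - 1 ≠ 0 := by omega
      simp [cExp, hk]
    · have h1 : (RatFunc.X : RatFunc K) ≠ 0 := RatFunc.X_ne_zero
      have h2 : (RatFunc.X : RatFunc K) = RatFunc.X ^ 2 * RatFunc.X⁻¹ := by field_simp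
      rw [Subalgebra.coe_mul, Subalgebra.coe_smul, coe_row_lt hΛ hn h, Matrix.smul_single]
      simpa [row, rowMatrix, h', Algebra.smul_def] using congrArg _ h2

/-- The diagonal matrix units of `Λ`. -/
def diag (k : Fin n) : Λ := ⟨Matrix.single k k 1, single_mem hΛ _ _ (by
  rw [← zpow_zero RatFunc.X]
  refine zpow_mem_xPow ?_
  simp only [cExp]
  split_ifs <;> simp_all)⟩

theorem sum_diag : ∑ k, diag hΛ k = 1 := by
  apply Subtype.ext
  rw [AddSubmonoidClass.coe_finsetSum]
  simp only [diag, Subalgebra.coe_one]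
  ext i j
  simp [Matrix.sum_apply, Matrix.single_apply, Matrix.one_apply, ite_and]

theorem row_mul_diag (k l : Fin n) :
    row hΛ hn k * diag hΛ l = if k = l then row hΛ hn k else 0 := by
  apply Subtype.ext
  rw [Subalgebra.coe_mul, coe_row_lt hΛ hn k.2]
  split_ifs with h
  · subst h
    simp [diag, coe_row_lt hΛ hn k.2]
  · simp [diag, Matrix.single_mul_single_of_ne, h]

theorem X_sq_smul_diag (k : Fin n) :
    ∃ a : Λ, (X ^ 2 : K[X]) • diag hΛ k = a * row hΛ hn k := by
  refine ⟨⟨Matrix.single k ⟨0, by omega⟩ (RatFunc.X ^ 2), single_mem hΛ _ _ ?_⟩, Subtype.ext ?_⟩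
  · rw [← zpow_natCast]
    refine zpow_mem_xPow ?_
    simp only [cExp]
    split_ifs <;> simp_all
  · rw [Subalgebra.coe_mul, Subalgebra.coe_smul, coe_row_lt hΛ hn k.2, diag, Matrix.smul_single]
    simp [Algebra.smul_def]

theorem X_smul_row_mul (a : Λ) (k : Fin n) : ∃ p : Fin n → K[X],
    (∀ l, RatFunc.X * (a : Matrix (Fin n) (Fin n) (RatFunc K)) k l =
      algebraMap K[X] (RatFunc K) (p l)) ∧
    (X : K[X]) • (row hΛ hn k * a) = ∑ l : Fin n, p l • row hΛ hn l := by
  have h1 : ∀ l, ∃ p : K[X], RatFunc.X * (a : Matrix (Fin n) (Fin n) (RatFunc K)) k l =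
      algebraMap K[X] (RatFunc K) p := fun l => by
    refine X_mul_mem_xPow (c := cExp n k l) ?_ ?_
    · simp only [cExp]
      split_ifs <;> omega
    · have := a.2
      rw [← SetLike.mem_coe, hΛ] at this
      exact this k l
  choose p hp using h1
  refine ⟨p, hp, Subtype.ext ?_⟩
  rw [AddSubmonoidClass.coe_finsetSum, Subalgebra.coe_smul, Subalgebra.coe_mul,
    coe_row_lt hΛ hn k.2]
  simp only [Subalgebra.coe_smul, coe_row_lt hΛ hn (Fin.is_lt _), Matrix.smul_single]
  ext i j
  rw [Matrix.sum_apply, Matrix.smul_apply]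
  simp only [Matrix.single_apply, ite_and, Algebra.smul_def, RatFunc.algebraMap_X]
  by_cases hi : (⟨0, by omega⟩ : Fin n) = i
  · subst hi
    simp [hp]
  · rw [Matrix.single_mul_apply_of_ne _ _ _ _ _ (Ne.symm hi)]
    simp [hi]

theorem exists_functional_of_prime {R F ι : Type*} [CommRing R] [IsDomain R]
    [IsPrincipalIdealRing R] [AddCommGroup F] [Module R F] [Finite ι] (b : Module.Basis ι R F)
    {x : R} (hx : Prime x) (S : Submodule R F) (hS : ∀ v, x ^ 2 • v ∈ S) {w : F}
    (hw : x • w ∉ S) :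
    ∃ (φ : F →ₗ[R] R) (u : F), φ u = 1 ∧ (∀ s ∈ S, x ^ 2 ∣ φ s) ∧ ¬ x ∣ φ w := by
  cases nonempty_fintype ι
  obtain ⟨m, snf⟩ := S.smithNormalForm b
  have hrepr : ∀ (s : S) (i : Fin m),
      snf.bM.repr (s : F) (snf.f i) = snf.a i * snf.bN.repr s i := fun s i => by
    rw [snf.repr_apply_embedding_eq_repr_smul]
    simp
  have hf : Function.Surjective snf.f := fun k => by
    by_contra hk
    have := snf.repr_eq_zero_of_notMem_range ⟨_, hS (snf.bM k)⟩ (i := k) (by simpa using hk)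
    simp [hx.ne_zero] at this
  have ha : ∀ i, snf.a i ∣ x ^ 2 := fun i => by
    have := hrepr ⟨_, hS (snf.bM (snf.f i))⟩ i
    rw [map_smul, Finsupp.smul_apply, Module.Basis.repr_self, Finsupp.single_eq_same,
      smul_eq_mul, mul_one] at this
    exact ⟨_, this⟩
  have h1 : ∃ i, ¬ snf.a i ∣ snf.bM.repr (x • w) (snf.f i) := by
    by_contra! h
    apply hw
    rw [← snf.bM.sum_repr (x • w)]
    refine S.sum_mem fun k _ => ?_
    obtain ⟨i, rfl⟩ := hf k
    obtain ⟨c, hc⟩ := h i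
    rw [hc, mul_comm, mul_smul, ← snf.snf]
    exact S.smul_mem _ (snf.bN i).2
  obtain ⟨i, hi⟩ := h1
  rw [map_smul, Finsupp.smul_apply, smul_eq_mul] at hi
  obtain ⟨s, hs, hassoc⟩ := (dvd_prime_pow hx 2).1 (ha i)
  have hs2 : s = 2 := by
    by_contra hne
    apply hi
    refine dvd_mul_of_dvd_left (hassoc.dvd.trans ?_) _
    simpa using pow_dvd_pow x (show s ≤ 1 by omega)
  subst hs2
  refine ⟨snf.bM.coord (snf.f i), snf.bM (snf.f i), by simp, fun s hs => ?_, fun h => hi ?_⟩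
  · rw [Module.Basis.coord_apply, hrepr ⟨s, hs⟩ i]
    exact dvd_mul_of_dvd_left hassoc.symm.dvd _
  · refine hassoc.dvd.trans ?_
    rw [sq]
    exact mul_dvd_mul_left x h

section Lattice

variable {M : Type} [AddCommGroup M] [Module K[X] M] [Module Λ M] [IsScalarTower K[X] Λ M]

variable (M) in
/-- The chain of sublattices `row k • M`. -/
def chain (k : ℕ) : Submodule K[X] M where
  carrier := {y | ∃ m : M, row hΛ hn k • m = y}
  add_mem' := by
    rintro _ _ ⟨a, rfl⟩ ⟨b, rfl⟩
    exact ⟨a + b, smul_add _ _ _⟩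
  zero_mem' := ⟨0, smul_zero _⟩
  smul_mem' := by
    rintro p _ ⟨a, rfl⟩
    exact ⟨p • a, smul_comm _ _ _⟩

theorem mem_chain {k : ℕ} {y : M} : y ∈ chain hΛ hn M k ↔ ∃ m : M, row hΛ hn k • m = y := Iff.rfl

theorem chain_succ_le {k : ℕ} (h : k < n) : chain hΛ hn M (k + 1) ≤ chain hΛ hn M k := by
  rintro _ ⟨m, rfl⟩
  obtain ⟨a, ha⟩ := row_succ hΛ hn h
  exact ⟨a • m, by rw [ha, mul_smul]⟩

theorem chain_le {k l : ℕ} (hkl : k ≤ l) (h : l ≤ n) : chain hΛ hn M l ≤ chain hΛ hn M k := by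
  induction l, hkl using Nat.le_induction with
  | base => exact le_rfl
  | succ l _ ih => exact (chain_succ_le hΛ hn (by omega)).trans (ih (by omega))

theorem X_smul_mem_chain {k : ℕ} (h : k < n) {y : M} (hy : y ∈ chain hΛ hn M k) :
    (X : K[X]) • y ∈ chain hΛ hn M (k + 1) := by
  obtain ⟨m, rfl⟩ := hy
  obtain ⟨a, ha⟩ := X_smul_row hΛ hn h
  exact ⟨a • m, by rw [← mul_smul, ← ha, smul_assoc]⟩

theorem mem_chain_self {y : M} :
    y ∈ chain hΛ hn M n ↔ ∃ z ∈ chain hΛ hn M 0, (X ^ 2 : K[X]) • z = y := by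
  rw [mem_chain, row_self]
  constructor
  · rintro ⟨m, rfl⟩
    exact ⟨_, ⟨m, rfl⟩, by rw [smul_assoc]⟩
  · rintro ⟨_, ⟨m, rfl⟩, rfl⟩
    exact ⟨m, by rw [smul_assoc]⟩

theorem row_zero_smul_of_mem {k : ℕ} (h : k ≤ n) {y : M} (hy : y ∈ chain hΛ hn M k) :
    row hΛ hn 0 • y = y := by
  obtain ⟨m, rfl⟩ := chain_le hΛ hn (Nat.zero_le k) h hy
  rw [← mul_smul, row_zero_mul]

theorem exists_row_smul_eq (y : Fin n → M) (hy : ∀ k : Fin n, y k ∈ chain hΛ hn M k) :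
    ∃ m : M, ∀ k : Fin n, row hΛ hn k • m = y k := by
  choose z hz using hy
  refine ⟨∑ l, diag hΛ l • z l, fun k => ?_⟩
  rw [smul_sum, sum_eq_single k]
  · rw [← mul_smul, row_mul_diag, if_pos rfl, hz]
  · intro l _ hl
    rw [← mul_smul, row_mul_diag, if_neg (Ne.symm hl), zero_smul]
  · simp

variable [NoZeroSMulDivisors K[X] M]

theorem eq_zero_of_row_smul {m : M} (h : ∀ k : Fin n, row hΛ hn k • m = 0) : m = 0 := by
  have h1 : ∀ k, diag hΛ k • m = 0 := fun k => by
    obtain ⟨a, ha⟩ := X_sq_smul_diag hΛ hn k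
    have : (X ^ 2 : K[X]) • (diag hΛ k • m) = 0 := by
      rw [← smul_assoc, ha, mul_smul, h, smul_zero]
    exact (smul_eq_zero.1 this).resolve_left (pow_ne_zero 2 X_ne_zero)
  rw [← one_smul Λ m, ← sum_diag hΛ, sum_smul]
  exact sum_eq_zero fun k _ => h1 k

theorem eq_of_row_smul {m m' : M} (h : ∀ k : Fin n, row hΛ hn k • m = row hΛ hn k • m') :
    m = m' := by
  rw [← sub_eq_zero]
  exact eq_zero_of_row_smul hΛ hn fun k => by rw [smul_sub, h, sub_self]

theorem exists_not_mem_chain [Module.Finite K[X] M] [Nontrivial M] :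
    ∃ (i j : ℕ) (w : M), 1 ≤ i ∧ i < j ∧ j ≤ n ∧ w ∈ chain hΛ hn M (i - 1) ∧
      (X : K[X]) • w ∈ chain hΛ hn M (j - 1) ∧
      ∀ a ∈ chain hΛ hn M i, (X : K[X]) • w - (X : K[X]) • a ∉ chain hΛ hn M j := by
  by_contra! hcon
  have key : ∀ j, 1 ≤ j → j ≤ n → ∀ y ∈ chain hΛ hn M 0, (X : K[X]) • y ∈ chain hΛ hn M j := by
    intro j hj
    induction j, hj using Nat.le_induction with
    | base => exact fun _ y hy => X_smul_mem_chain hΛ hn (by omega) hy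
    | succ j hj ih =>
      intro hjn y hy
      have step : ∀ i ≤ j, ∃ a ∈ chain hΛ hn M i,
          (X : K[X]) • y - (X : K[X]) • a ∈ chain hΛ hn M (j + 1) := by
        intro i
        induction i with
        | zero => exact fun _ => ⟨y, hy, by simp⟩
        | succ i ihi =>
          intro hij
          obtain ⟨a, ha, hya⟩ := ihi (by omega)
          have hxa : (X : K[X]) • a ∈ chain hΛ hn M j := by
            have := (chain hΛ hn M j).sub_mem (ih (by omega) y hy)
              (chain_succ_le hΛ hn (by omega) hya)
            simpa using this
          obtain ⟨a', ha', haa'⟩ := hcon (i + 1) (j + 1) a (by omega) (by omega) hjn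
            (by simpa using ha) (by simpa using hxa)
          refine ⟨a', ha', ?_⟩
          simpa using (chain hΛ hn M (j + 1)).add_mem hya haa'
      obtain ⟨a, ha, hya⟩ := step j le_rfl
      simpa using (chain hΛ hn M (j + 1)).add_mem hya (X_smul_mem_chain hΛ hn (by omega) ha)
  have hle : chain hΛ hn M 0 ≤ Ideal.span {(X : K[X])} • chain hΛ hn M 0 := fun y hy => by
    obtain ⟨z, hz, hzy⟩ := (mem_chain_self hΛ hn).1 (key n (by omega) le_rfl y hy)
    have : y = (X : K[X]) • z := by
      rw [← sub_eq_zero]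
      refine (smul_eq_zero.1 (?_ : (X : K[X]) • (y - (X : K[X]) • z) = 0)).resolve_left X_ne_zero
      rw [smul_sub, ← hzy, smul_smul, sq, sub_self]
    rw [this]
    exact Submodule.smul_mem_smul (Ideal.mem_span_singleton_self _) hz
  obtain ⟨r, hr, hr0⟩ := Submodule.exists_sub_one_mem_and_smul_eq_zero_of_fg_of_le_smul _ _
    (IsNoetherian.noetherian (chain hΛ hn M 0)) hle
  have hrne : r ≠ 0 := by
    rintro rfl
    rw [Ideal.mem_span_singleton, zero_sub, dvd_neg] at hr
    exact not_isUnit_X (isUnit_of_dvd_one hr)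
  obtain ⟨m, hm⟩ := exists_ne (0 : M)
  refine hm (eq_zero_of_row_smul hΛ hn fun k => ?_)
  exact (smul_eq_zero.1 (hr0 _ (chain_le hΛ hn (Nat.zero_le k) k.2.le ⟨m, rfl⟩))).resolve_left hrne

end Lattice

theorem exists_splitting_functional {M : Type} [AddCommGroup M] [Module K[X] M] [Module Λ M]
    [IsScalarTower K[X] Λ M] [NoZeroSMulDivisors K[X] M] [Module.Finite K[X] M] [Nontrivial M] :
    ∃ (i j : ℕ) (φ : M →ₗ[K[X]] K[X]) (w : M), 1 ≤ i ∧ i < j ∧ j ≤ n ∧ φ w = 1 ∧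
      w ∈ chain hΛ hn M (i - 1) ∧ (X : K[X]) • w ∈ chain hΛ hn M (j - 1) ∧
      (∀ a ∈ chain hΛ hn M i, X ∣ φ a) ∧ ∀ a ∈ chain hΛ hn M j, X ^ 2 ∣ φ a := by
  obtain ⟨i, j, w, hi, hij, hj, hwi, hwj, hw⟩ := exists_not_mem_chain hΛ hn (M := M)
  have hle : ∀ k ≤ n, chain hΛ hn M k ≤ chain hΛ hn M 0 := fun k => chain_le hΛ hn (Nat.zero_le k)
  have hX2 : ∀ v ∈ chain hΛ hn M 0, ∀ k ≤ n, (X ^ 2 : K[X]) • v ∈ chain hΛ hn M k :=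
    fun v hv k hk => chain_le hΛ hn hk le_rfl ((mem_chain_self hΛ hn).2 ⟨v, hv, rfl⟩)
  obtain ⟨φ, u, hu, hS, hφw⟩ := exists_functional_of_prime
    (Module.Free.chooseBasis K[X] (chain hΛ hn M 0)) prime_X
    ((chain hΛ hn M j ⊔ (chain hΛ hn M i).map (LinearMap.lsmul K[X] M X)).comap
      (chain hΛ hn M 0).subtype)
    (fun v => Submodule.mem_sup_left (hX2 v v.2 j hj)) (w := ⟨w, hle _ (by omega) hwi⟩) (by
      intro h
      obtain ⟨a, ha, _, ⟨b, hb, rfl⟩, hab⟩ := Submodule.mem_sup.1 (Submodule.mem_comap.1 h)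
      refine hw b hb ?_
      have : (X : K[X]) • w = a + (X : K[X]) • b := hab.symm
      simpa [this] using ha)
  let π : M →ₗ[K[X]] chain hΛ hn M 0 :=
    { toFun := fun m => ⟨row hΛ hn 0 • m, ⟨m, rfl⟩⟩
      map_add' := fun a b => Subtype.ext (smul_add _ _ _)
      map_smul' := fun p a => Subtype.ext (smul_comm _ _ _) }
  have hπ : ∀ a : chain hΛ hn M 0, π a = a :=
    fun a => Subtype.ext (row_zero_smul_of_mem hΛ hn (Nat.zero_le n) a.2)
  have hcop := ((irreducible_X (R := K)).coprime_iff_not_dvd.2 hφw).pow_left (m := 2)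
  obtain ⟨a, b, hab⟩ := hcop
  have hsum : ∀ k ≤ n, ∀ p : K[X], (p * (a * X ^ 2)) • (u : M) ∈ chain hΛ hn M k :=
    fun k hk p => by
      rw [← mul_assoc, mul_smul]
      exact Submodule.smul_mem _ _ (hX2 _ u.2 k hk)
  refine ⟨i, j, φ ∘ₗ π, b • w + (a * X ^ 2) • (u : M), hi, hij, hj, ?_, ?_, ?_, ?_, ?_⟩
  · have := hπ (b • ⟨w, hle _ (by omega) hwi⟩ + (a * X ^ 2) • u)
    rw [LinearMap.comp_apply]
    refine (congrArg φ this).trans ?_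
    rw [map_add, map_smul, map_smul, hu, smul_eq_mul, smul_eq_mul, mul_one, add_comm, hab]
  · exact Submodule.add_mem _ (Submodule.smul_mem _ _ hwi) (by
      simpa using hsum (i - 1) (by omega) 1)
  · rw [smul_add, smul_comm (X : K[X]) b w, ← mul_smul X]
    exact Submodule.add_mem _ (Submodule.smul_mem _ _ hwj) (hsum _ (by omega) X)
  · intro y hy
    have h1 := hS ((X : K[X]) • ⟨y, hle i (by omega) hy⟩) (Submodule.mem_sup_right ⟨y, hy, rfl⟩)
    rw [map_smul, smul_eq_mul, sq] at h1
    rw [LinearMap.comp_apply, hπ ⟨y, hle i (by omega) hy⟩]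
    exact (mul_dvd_mul_iff_left X_ne_zero).1 h1
  · intro y hy
    rw [LinearMap.comp_apply, hπ ⟨y, hle j hj hy⟩]
    exact hS ⟨y, hle j hj hy⟩ (Submodule.mem_sup_left hy)

instance : IsScalarTower K[X] Λ (Fin n → RatFunc K) :=
  ⟨fun p a v => Matrix.smul_mulVec p (a : Matrix (Fin n) (Fin n) (RatFunc K)) v⟩

theorem coe_smul_apply (a : Λ) (v : Fin n → RatFunc K) (k : Fin n) :
    (a • v) k = ∑ l, (a : Matrix (Fin n) (Fin n) (RatFunc K)) k l * v l := rfl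

instance : NoZeroSMulDivisors K[X] (Fin n → RatFunc K) where
  eq_zero_or_eq_zero_of_smul_eq_zero {p v} h := by
    refine or_iff_not_imp_left.2 fun hp => funext fun k => ?_
    have := congrFun h k
    rw [Pi.smul_apply, Algebra.smul_def] at this
    exact (mul_eq_zero.1 this).resolve_left (RatFunc.algebraMap_ne_zero hp)

instance (N : Submodule Λ (Fin n → RatFunc K)) : NoZeroSMulDivisors K[X] N :=
  Function.Injective.noZeroSMulDivisors (fun v => (v : Fin n → RatFunc K)) Subtype.val_injective
    rfl fun _ _ => rfl

theorem row_smul_apply_zero (k : Fin n) (v : Fin n → RatFunc K) :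
    (row hΛ hn k • v) ⟨0, by omega⟩ = v k := by
  rw [coe_smul_apply, coe_row_lt hΛ hn k.2, sum_eq_single k]
  · simp
  · intro l _ hl
    simp [Ne.symm hl]
  · simp

theorem row_smul_apply_of_ne (k : Fin n) (v : Fin n → RatFunc K) {l : Fin n} (hl : (l : ℕ) ≠ 0) :
    (row hΛ hn k • v) l = 0 := by
  rw [coe_smul_apply, coe_row_lt hΛ hn k.2]
  refine sum_eq_zero fun m _ => ?_
  rw [Matrix.single_apply, if_neg, zero_mul]
  rintro ⟨rfl, -⟩
  exact hl rfl

section RankOne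

variable {E : ℕ → ℕ → Submodule Λ (Fin n → RatFunc K)}
  (hE : ∀ i j : ℕ, 1 ≤ i → i < j → j ≤ n →
      (E i j : Set (Fin n → RatFunc K)) = ijSet K n i j)
  {i j : ℕ} (hi : 1 ≤ i) (hij : i < j) (hj : j ≤ n)

include hE hi hij hj in
theorem mem_E {v : Fin n → RatFunc K} : v ∈ E i j ↔
    ∀ k : Fin n, ∃ p : K[X], v k = algebraMap K[X] (RatFunc K) (X ^ depth i j k * p) := by
  rw [← SetLike.mem_coe, hE i j hi hij hj, mem_ijSet]

include hE hi hij hj in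
theorem exists_coord (v : E i j) (k : Fin n) : ∃ p : K[X],
    (v : Fin n → RatFunc K) k = algebraMap K[X] (RatFunc K) p :=
  ((mem_E hE hi hij hj).1 v.2 k).imp' _ fun _ h => h

/-- The first standard basis vector as an element of the module `(i, j)`. -/
def generator : E i j := ⟨fun k => if (k : ℕ) = 0 then 1 else 0, (mem_E hE hi hij hj).2 fun k => by
  by_cases h : (k : ℕ) = 0
  · exact ⟨1, by simp [h, depth, show 0 < i by omega]⟩
  · exact ⟨0, by simp [h]⟩⟩

theorem row_smul_eq_smul_generator (v : E i j) (k : Fin n) (p : K[X])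
    (h : (v : Fin n → RatFunc K) k = algebraMap K[X] (RatFunc K) p) :
    row hΛ hn k • v = p • generator hE hi hij hj := by
  apply Subtype.ext
  funext l
  rw [Submodule.coe_smul, Submodule.coe_smul_of_tower, Pi.smul_apply]
  by_cases hl : (l : ℕ) = 0
  · have hl' : l = ⟨0, by omega⟩ := Fin.ext hl
    rw [hl', row_smul_apply_zero, h]
    simp [generator, Algebra.smul_def]
  · rw [row_smul_apply_of_ne hΛ hn k _ hl]
    simp [generator, hl]

include hΛ hn hE hi hij hj in
theorem exists_scalar (f : E i j →ₗ[Λ] (Fin n → RatFunc K)) :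
    ∃ q : RatFunc K, ∀ (v : E i j) (k : Fin n), f v k = q * (v : Fin n → RatFunc K) k := by
  refine ⟨f (generator hE hi hij hj) ⟨0, by omega⟩, fun v k => ?_⟩
  obtain ⟨p, hp⟩ := exists_coord hE hi hij hj v k
  have h1 := congrArg f (row_smul_eq_smul_generator hΛ hn hE hi hij hj v k p hp)
  rw [map_smul, LinearMap.map_smul_of_tower] at h1
  rw [hp, ← row_smul_apply_zero hΛ hn k (f v), h1, Pi.smul_apply, Algebra.smul_def, mul_comm]

variable {M : Type} [AddCommGroup M] [Module K[X] M] [Module Λ M] [IsScalarTower K[X] Λ M]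
  [NoZeroSMulDivisors K[X] M]

include hE hi hij hj in
theorem exists_hom_of_mem_chain {w : M} (hwi : w ∈ chain hΛ hn M (i - 1))
    (hwj : (X : K[X]) • w ∈ chain hΛ hn M (j - 1)) :
    ∃ ψ : E i j →ₗ[Λ] M, ∀ (v : E i j) (k : Fin n) (p : K[X]),
      (v : Fin n → RatFunc K) k = algebraMap K[X] (RatFunc K) p →
        row hΛ hn k • ψ v = p • w := by
  have hinj := RatFunc.algebraMap_injective K
  have hw0 : w ∈ chain hΛ hn M 0 := chain_le hΛ hn (Nat.zero_le _) (by omega) hwi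
  have hmem : ∀ k : Fin n, (X : K[X]) ^ depth i j k • w ∈ chain hΛ hn M k := fun k => by
    unfold depth
    split_ifs with h1 h2
    · rw [pow_zero, one_smul]
      exact chain_le hΛ hn (by omega) (by omega) hwi
    · rw [pow_one]
      exact chain_le hΛ hn (by omega) (by omega) hwj
    · exact chain_le hΛ hn k.2.le le_rfl ((mem_chain_self hΛ hn).2 ⟨w, hw0, rfl⟩)
  have hex : ∀ v : E i j, ∃ m : M, ∀ (k : Fin n) (p : K[X]),
      (v : Fin n → RatFunc K) k = algebraMap K[X] (RatFunc K) p → row hΛ hn k • m = p • w := by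
    intro v
    choose p hp using (mem_E hE hi hij hj).1 v.2
    obtain ⟨m, hm⟩ := exists_row_smul_eq hΛ hn (fun k => (X ^ depth i j k * p k) • w) fun k => by
      rw [mul_comm, mul_smul]
      exact Submodule.smul_mem _ _ (hmem k)
    refine ⟨m, fun k q hq => ?_⟩
    rw [hp k] at hq
    rw [hm, hinj hq]
  choose ψ hψ using hex
  refine ⟨{ toFun := ψ, map_add' := fun u v => ?_, map_smul' := fun a v => ?_ }, hψ⟩
  · refine eq_of_row_smul hΛ hn fun k => ?_
    obtain ⟨p, hp⟩ := exists_coord hE hi hij hj u k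
    obtain ⟨q, hq⟩ := exists_coord hE hi hij hj v k
    rw [smul_add, hψ u k p hp, hψ v k q hq, ← add_smul]
    exact hψ (u + v) k (p + q) (by rw [map_add, ← hp, ← hq]; rfl)
  · refine eq_of_row_smul hΛ hn fun k => ?_
    obtain ⟨c, hc, hsum⟩ := X_smul_row_mul hΛ hn a k
    choose q hq using exists_coord hE hi hij hj v
    obtain ⟨r, hr⟩ := exists_coord hE hi hij hj (a • v) k
    have hXr : X * r = ∑ l, c l * q l := by
      apply hinj
      rw [map_mul, ← hr, map_sum, RatFunc.algebraMap_X, Submodule.coe_smul, coe_smul_apply,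
        mul_sum]
      refine sum_congr rfl fun l _ => ?_
      rw [map_mul, ← hc, ← hq, mul_assoc]
    rw [hψ (a • v) k r hr, RingHom.id_apply, ← mul_smul]
    refine smul_right_injective M (X_ne_zero (R := K)) (?_ : (X : K[X]) • _ = (X : K[X]) • _)
    rw [← mul_smul, hXr, ← smul_assoc, hsum, sum_smul, sum_smul]
    refine sum_congr rfl fun l _ => ?_
    rw [smul_assoc, hψ v l _ (hq l), mul_smul]

end RankOne

theorem isCMMod_iff (M : Type) [AddCommGroup M] [Module K[X] M] [Module Λ M]
    [IsScalarTower K[X] Λ M] :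
    IsCMMod Λ M ↔ Module.Finite K[X] M ∧ NoZeroSMulDivisors K[X] M := by
  have : Module.compHom M (algebraMap K[X] Λ) = ‹Module K[X] M› := by
    refine Module.ext' _ _ fun p m => ?_
    change algebraMap K[X] Λ p • m = p • m
    rw [algebraMap_smul]
  unfold IsCMMod
  rw [this]

theorem _root_.IsCMMod.of_injective {M N : Type} [AddCommGroup M] [Module Λ M] [AddCommGroup N]
    [Module Λ N] (h : IsCMMod Λ M) (f : N →ₗ[Λ] M) (hf : Function.Injective f) :
    IsCMMod Λ N := by
  let : Module K[X] M := Module.compHom M (algebraMap K[X] Λ)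
  let : Module K[X] N := Module.compHom N (algebraMap K[X] Λ)
  have : IsScalarTower K[X] Λ M := .of_algebraMap_smul fun _ _ => rfl
  have : IsScalarTower K[X] Λ N := .of_algebraMap_smul fun _ _ => rfl
  obtain ⟨h1, h2⟩ := (isCMMod_iff M).1 h
  exact (isCMMod_iff N).2 ⟨Module.Finite.of_injective (f.restrictScalars K[X]) hf,
    hf.noZeroSMulDivisors f f.map_zero fun c x => f.map_smul_of_tower c x⟩

section RankOne

variable {E : ℕ → ℕ → Submodule Λ (Fin n → RatFunc K)}
  (hE : ∀ i j : ℕ, 1 ≤ i → i < j → j ≤ n →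
      (E i j : Set (Fin n → RatFunc K)) = ijSet K n i j)

include hE in
theorem finite_E {i j : ℕ} (hi : 1 ≤ i) (hij : i < j) (hj : j ≤ n) :
    Module.Finite K[X] (E i j) := by
  let f : (Fin n → K[X]) →ₗ[K[X]] (Fin n → RatFunc K) :=
    LinearMap.pi fun k => (Algebra.linearMap K[X] (RatFunc K)) ∘ₗ
      (LinearMap.lsmul K[X] K[X] (X ^ depth i j k)) ∘ₗ LinearMap.proj k
  have hf : ∀ c, f c ∈ (E i j).restrictScalars K[X] := fun c =>
    (mem_E hE hi hij hj).2 fun k => ⟨c k, rfl⟩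
  have hs : Function.Surjective (f.codRestrict ((E i j).restrictScalars K[X]) hf) := by
    rintro ⟨v, hv⟩
    choose p hp using (mem_E hE hi hij hj).1 hv
    exact ⟨p, Subtype.ext (funext fun k => (hp k).symm)⟩
  exact Module.Finite.of_surjective _ hs

include hE in
theorem isCMMod_pi_E {ι : Type} [Finite ι] {q : ι → ℕ × ℕ}
    (hq : ∀ a, 1 ≤ (q a).1 ∧ (q a).1 < (q a).2 ∧ (q a).2 ≤ n) :
    IsCMMod Λ (∀ a, E (q a).1 (q a).2) := by
  have : ∀ a, Module.Finite K[X] (E (q a).1 (q a).2) :=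
    fun a => finite_E hE (hq a).1 (hq a).2.1 (hq a).2.2
  exact (isCMMod_iff _).2 ⟨inferInstance, inferInstance⟩

include hE hΛ hn in
theorem exists_retract {M : Type} [AddCommGroup M] [Module Λ M] (hM : IsCMMod Λ M)
    [Nontrivial M] : ∃ p : ℕ × ℕ, (1 ≤ p.1 ∧ p.1 < p.2 ∧ p.2 ≤ n) ∧
      ∃ (f : E p.1 p.2 →ₗ[Λ] M) (g : M →ₗ[Λ] E p.1 p.2), g ∘ₗ f = LinearMap.id := by
  let : Module K[X] M := Module.compHom M (algebraMap K[X] Λ)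
  have : IsScalarTower K[X] Λ M := .of_algebraMap_smul fun _ _ => rfl
  obtain ⟨_, _⟩ := (isCMMod_iff M).1 hM
  obtain ⟨i, j, φ, w, hi, hij, hj, hφw, hwi, hwj, hφi, hφj⟩ :=
    exists_splitting_functional hΛ hn (M := M)
  obtain ⟨ψ, hψ⟩ := exists_hom_of_mem_chain hΛ hn hE hi hij hj hwi hwj
  let g : M →ₗ[Λ] (Fin n → RatFunc K) :=
    { toFun := fun m k => algebraMap K[X] (RatFunc K) (φ (row hΛ hn k • m))
      map_add' := fun a b => funext fun k => by
        simp only [smul_add, map_add, Pi.add_apply]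
      map_smul' := fun a m => funext fun k => by
        obtain ⟨c, hc, hsum⟩ := X_smul_row_mul hΛ hn a k
        have h1 : (RatFunc.X : RatFunc K) ≠ 0 := RatFunc.X_ne_zero
        refine mul_left_cancel₀ h1 ?_
        rw [RingHom.id_apply, coe_smul_apply, mul_sum, ← RatFunc.algebraMap_X, ← map_mul,
          ← smul_eq_mul, ← map_smul, ← mul_smul, ← smul_assoc, hsum, sum_smul, map_sum, map_sum]
        refine sum_congr rfl fun l _ => ?_
        rw [smul_assoc, map_smul, smul_eq_mul, map_mul, ← hc, RatFunc.algebraMap_X, mul_assoc] }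
  have hg : ∀ m, g m ∈ E i j := fun m => (mem_E hE hi hij hj).2 fun k => by
    have hk : row hΛ hn k • m ∈ chain hΛ hn M k := ⟨m, rfl⟩
    have : X ^ depth i j k ∣ φ (row hΛ hn k • m) := by
      unfold depth
      split_ifs with h1 h2
      · simp
      · rw [pow_one]
        exact hφi _ (chain_le hΛ hn (by omega) k.2.le hk)
      · exact hφj _ (chain_le hΛ hn (by omega) k.2.le hk)
    obtain ⟨p, hp⟩ := this
    exact ⟨p, congrArg (algebraMap K[X] (RatFunc K)) hp⟩
  refine ⟨(i, j), ⟨hi, hij, hj⟩, ψ, g.codRestrict _ hg, LinearMap.ext fun v =>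
    Subtype.ext (funext fun k => ?_)⟩
  obtain ⟨p, hp⟩ := exists_coord hE hi hij hj v k
  change algebraMap K[X] (RatFunc K) (φ (row hΛ hn k • ψ v)) = (v : Fin n → RatFunc K) k
  rw [hψ v k p hp, map_smul, hφw, smul_eq_mul, mul_one, hp]

section Pair

variable {i j : ℕ} (hi : 1 ≤ i) (hij : i < j) (hj : j ≤ n)

include hE hi hij hj in
theorem exists_mem_E_apply_eq (k : Fin n) (p : K[X]) : ∃ v : E i j,
    (v : Fin n → RatFunc K) k = algebraMap K[X] (RatFunc K) (X ^ depth i j k * p) := by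
  refine ⟨⟨Pi.single k (algebraMap K[X] (RatFunc K) (X ^ depth i j k * p)),
    (mem_E hE hi hij hj).2 fun l => ?_⟩, by simp⟩
  by_cases h : l = k
  · subst h
    exact ⟨p, by simp⟩
  · exact ⟨0, by simp [h]⟩

theorem smul_generator_mem_chain {k : ℕ} (hk : k ≤ n) (p : K[X]) :
    (X ^ depth i j k * p) • generator hE hi hij hj ∈ chain hΛ hn (E i j) k := by
  have main : ∀ (k : Fin n) (p : K[X]),
      (X ^ depth i j k * p) • generator hE hi hij hj ∈ chain hΛ hn (E i j) k := fun k p => by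
    obtain ⟨v, hv⟩ := exists_mem_E_apply_eq hE hi hij hj k p
    exact ⟨v, row_smul_eq_smul_generator hΛ hn hE hi hij hj v k _ hv⟩
  rcases hk.lt_or_eq with h | rfl
  · exact main ⟨k, h⟩ p
  · rw [mem_chain_self]
    refine ⟨p • generator hE hi hij hj, ?_, ?_⟩
    · simpa [depth, show 0 < i by omega] using main ⟨0, by omega⟩ p
    · rw [← mul_smul]
      simp [depth, show ¬ k < i by omega, show ¬ k < j by omega]

theorem exists_of_mem_chain {k : ℕ} (hk : k ≤ n) {y : E i j} (hy : y ∈ chain hΛ hn (E i j) k) :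
    ∃ p : K[X], y = (X ^ depth i j k * p) • generator hE hi hij hj := by
  have main : ∀ (k : Fin n), ∀ y ∈ chain hΛ hn (E i j) k, ∃ p : K[X],
      y = (X ^ depth i j k * p) • generator hE hi hij hj := by
    rintro k _ ⟨v, rfl⟩
    obtain ⟨p, hp⟩ := (mem_E hE hi hij hj).1 v.2 k
    exact ⟨p, row_smul_eq_smul_generator hΛ hn hE hi hij hj v k _ hp⟩
  rcases hk.lt_or_eq with h | rfl
  · exact main ⟨k, h⟩ y hy
  · obtain ⟨z, hz, rfl⟩ := (mem_chain_self hΛ hn).1 hy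
    obtain ⟨p, rfl⟩ := main ⟨0, by omega⟩ z hz
    refine ⟨p, ?_⟩
    rw [← mul_smul]
    simp [depth, show 0 < i by omega, show ¬ k < i by omega, show ¬ k < j by omega]

theorem pow_dvd_of_smul_generator_mem {k : ℕ} (hk : k ≤ n) {p : K[X]}
    (hp : p • generator hE hi hij hj ∈ chain hΛ hn (E i j) k) : X ^ depth i j k ∣ p := by
  obtain ⟨q, hq⟩ := exists_of_mem_chain hΛ hn hE hi hij hj hk hp
  refine ⟨q, ?_⟩
  have h := congrArg (fun v : E i j => (v : Fin n → RatFunc K) ⟨0, by omega⟩) hq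
  simp only [Submodule.coe_smul_of_tower, Pi.smul_apply, generator, if_true, Algebra.smul_def,
    mul_one] at h
  exact RatFunc.algebraMap_injective K h

end Pair

end RankOne

theorem mem_chain_of_map_mem {Z B W : Type} [AddCommGroup Z] [Module K[X] Z] [Module Λ Z]
    [IsScalarTower K[X] Λ Z] [AddCommGroup B] [Module K[X] B] [Module Λ B]
    [IsScalarTower K[X] Λ B] [AddCommGroup W] [Module K[X] W] [Module Λ W]
    [IsScalarTower K[X] Λ W] [NoZeroSMulDivisors K[X] W] {f : Z →ₗ[Λ] B} {g : B →ₗ[Λ] W}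
    (hf : Function.Injective f) (hfg : LinearMap.range f = LinearMap.ker g) {k : ℕ} (hk : k ≤ n)
    {z : Z} (hz : f z ∈ chain hΛ hn B k) : z ∈ chain hΛ hn Z k := by
  have hgf : ∀ z, g (f z) = 0 := fun z => by
    rw [← LinearMap.mem_ker, ← hfg]
    exact ⟨z, rfl⟩
  have main : ∀ (k : Fin n) (z : Z), f z ∈ chain hΛ hn B k → z ∈ chain hΛ hn Z k := by
    rintro k z ⟨b, hb⟩
    have hker : diag hΛ k • b ∈ LinearMap.ker g := by
      rw [LinearMap.mem_ker]
      refine eq_zero_of_row_smul hΛ hn fun l => ?_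
      rw [← map_smul, ← mul_smul, row_mul_diag]
      split_ifs with h
      · rw [h, hb, hgf]
      · rw [zero_smul, map_zero]
    rw [← hfg] at hker
    obtain ⟨z', hz'⟩ := hker
    refine ⟨z', hf ?_⟩
    rw [map_smul, hz', ← mul_smul, row_mul_diag, if_pos rfl, hb]
  rcases hk.lt_or_eq with h | rfl
  · exact main ⟨k, h⟩ z hz
  · obtain ⟨y, hy, hyz⟩ := (mem_chain_self hΛ hn).1 hz
    have hker : y ∈ LinearMap.ker g := by
      rw [LinearMap.mem_ker]
      have h0 : (X ^ 2 : K[X]) • g y = 0 := by rw [← LinearMap.map_smul_of_tower, hyz, hgf]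
      exact (smul_eq_zero.1 h0).resolve_left (pow_ne_zero 2 X_ne_zero)
    rw [← hfg] at hker
    obtain ⟨z', rfl⟩ := hker
    refine (mem_chain_self hΛ hn).2 ⟨z', main ⟨0, by omega⟩ z' hy, hf ?_⟩
    rw [LinearMap.map_smul_of_tower, hyz]

section Ext

variable {E : ℕ → ℕ → Submodule Λ (Fin n → RatFunc K)}
  (hE : ∀ i j : ℕ, 1 ≤ i → i < j → j ≤ n →
      (E i j : Set (Fin n → RatFunc K)) = ijSet K n i j)

theorem depth_of_not_crossing {i j k l : ℕ} (hi : 1 ≤ i) (hij : i < j)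
    (h : ¬ Crossing (i, j) (k, l)) :
    (depth k l (j - 1) ≤ depth k l i ∨ depth k l (j - 1) + 1 ≤ depth k l j) ∨
      (depth k l (i - 1) + 1 ≤ depth k l i ∨ depth k l (i - 1) + 2 ≤ depth k l j) := by
  unfold Crossing at h
  simp only [depth]
  split_ifs <;> omega

include hE hΛ hn in
theorem exists_correction {i j k l : ℕ} (hi : 1 ≤ i) (hij : i < j) (hj : j ≤ n) (hk : 1 ≤ k)
    (hkl : k < l) (hl : l ≤ n) (h : ¬ Crossing (i, j) (k, l)) {z : E k l}
    (hzi : z ∈ chain hΛ hn (E k l) i) (hzj : (X : K[X]) • z ∈ chain hΛ hn (E k l) j) :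
    ∃ a ∈ chain hΛ hn (E k l) (i - 1), ∃ b ∈ chain hΛ hn (E k l) (j - 1),
      z = (X : K[X]) • a + b := by
  have key : ∀ {m : ℕ} {p : K[X]}, m ≤ n → X ^ depth k l m ∣ p →
      p • generator hE hk hkl hl ∈ chain hΛ hn (E k l) m := by
    rintro m _ hm ⟨q, rfl⟩
    exact smul_generator_mem_chain hΛ hn hE hk hkl hl hm q
  obtain ⟨p', hp'⟩ := exists_of_mem_chain hΛ hn hE hk hkl hl (by omega) hzi
  obtain ⟨p, hp⟩ : ∃ p, p = X ^ depth k l i * p' := ⟨_, rfl⟩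
  rw [← hp] at hp'
  subst hp'
  have h1 : X ^ depth k l i ∣ p := ⟨p', hp⟩
  rw [← mul_smul] at hzj
  have h2 := pow_dvd_of_smul_generator_mem hΛ hn hE hk hkl hl hj hzj
  have h3 : ∀ m, m + 1 ≤ depth k l j → X ^ m ∣ p := fun m hm => by
    have := (pow_dvd_pow X hm).trans h2
    rw [pow_succ'] at this
    exact (mul_dvd_mul_iff_left X_ne_zero).1 this
  have h4 : ∀ m, m ≤ depth k l i → X ^ m ∣ p := fun m hm => (pow_dvd_pow X hm).trans h1
  rcases depth_of_not_crossing hi hij h with hA | hB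
  · refine ⟨0, zero_mem _, _, key (by omega) (hA.elim (h4 _) (h3 _)), ?_⟩
    rw [smul_zero, zero_add]
  · have h5 : X ^ (depth k l (i - 1) + 1) ∣ p := hB.elim (h4 _) (h3 _)
    obtain ⟨q, rfl⟩ := h5
    refine ⟨(X ^ depth k l (i - 1) * q) • generator hE hk hkl hl, key (by omega) ⟨q, rfl⟩,
      0, zero_mem _, ?_⟩
    rw [← mul_smul, add_zero]
    congr 1
    ring

theorem map_mem_chain {Z B : Type} [AddCommGroup Z] [Module K[X] Z] [Module Λ Z]
    [IsScalarTower K[X] Λ Z] [AddCommGroup B] [Module K[X] B] [Module Λ B]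
    [IsScalarTower K[X] Λ B] (f : Z →ₗ[Λ] B) {k : ℕ} {z : Z} (hz : z ∈ chain hΛ hn Z k) :
    f z ∈ chain hΛ hn B k := by
  obtain ⟨m, rfl⟩ := hz
  exact ⟨f m, by rw [map_smul]⟩

theorem exists_lift_mem_chain {B W : Type} [AddCommGroup B] [Module K[X] B] [Module Λ B]
    [IsScalarTower K[X] Λ B] [AddCommGroup W] [Module K[X] W] [Module Λ W]
    [IsScalarTower K[X] Λ W] {g : B →ₗ[Λ] W} (hg : Function.Surjective g) {k : ℕ} {y : W}
    (hy : y ∈ chain hΛ hn W k) : ∃ b ∈ chain hΛ hn B k, g b = y := by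
  obtain ⟨m, rfl⟩ := hy
  obtain ⟨b, rfl⟩ := hg m
  exact ⟨row hΛ hn k • b, ⟨b, rfl⟩, map_smul _ _ _⟩

include hE hΛ hn in
theorem splitsExt_of_not_crossing {i j k l : ℕ} (hi : 1 ≤ i) (hij : i < j) (hj : j ≤ n)
    (hk : 1 ≤ k) (hkl : k < l) (hl : l ≤ n) (h : ¬ Crossing (i, j) (k, l)) :
    SplitsExt Λ (E k l) (E i j) := by
  intro B f g hf hg hfg
  let : Module K[X] B := Module.compHom B (algebraMap K[X] Λ)
  have : IsScalarTower K[X] Λ B := .of_algebraMap_smul fun _ _ => rfl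
  have hgf : ∀ z, g (f z) = 0 := fun z => by
    rw [← LinearMap.mem_ker, ← hfg]
    exact ⟨z, rfl⟩
  have : NoZeroSMulDivisors K[X] B := ⟨fun {c b} hcb => by
    by_contra! hne
    have h1 : c • g b = 0 := by rw [← LinearMap.map_smul_of_tower, hcb, map_zero]
    have h2 : b ∈ LinearMap.ker g := (smul_eq_zero.1 h1).resolve_left hne.1
    rw [← hfg] at h2
    obtain ⟨z, rfl⟩ := h2
    rw [← LinearMap.map_smul_of_tower, ← map_zero f] at hcb
    refine hne.2 ?_
    rw [(smul_eq_zero.1 (hf hcb)).resolve_left hne.1, map_zero]⟩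
  have hc : generator hE hi hij hj ∈ chain hΛ hn (E i j) (i - 1) := by
    simpa [depth, show i - 1 < i by omega] using
      smul_generator_mem_chain hΛ hn hE hi hij hj (k := i - 1) (by omega) 1
  have hXc : (X : K[X]) • generator hE hi hij hj ∈ chain hΛ hn (E i j) (j - 1) := by
    simpa [depth, show ¬ j - 1 < i by omega, show j - 1 < j by omega] using
      smul_generator_mem_chain hΛ hn hE hi hij hj (k := j - 1) (by omega) 1
  obtain ⟨w, hw, hgw⟩ := exists_lift_mem_chain hΛ hn hg hc
  obtain ⟨y, hy, hgy⟩ := exists_lift_mem_chain hΛ hn hg hXc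
  have hker : (X : K[X]) • w - y ∈ LinearMap.ker g := by
    rw [LinearMap.mem_ker, map_sub, LinearMap.map_smul_of_tower, hgw, hgy, sub_self]
  rw [← hfg] at hker
  obtain ⟨z, hz⟩ := hker
  have hsucc : ∀ m, 1 ≤ m → m ≤ n → ∀ b ∈ chain hΛ hn B (m - 1),
      (X : K[X]) • b ∈ chain hΛ hn B m := fun m h1 h2 b hb => by
    simpa [show m - 1 + 1 = m by omega] using X_smul_mem_chain hΛ hn (by omega) hb
  have hzi : z ∈ chain hΛ hn (E k l) i := by
    refine mem_chain_of_map_mem hΛ hn hf hfg (by omega) ?_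
    rw [hz]
    exact sub_mem (hsucc i hi (by omega) _ hw) (chain_le hΛ hn (by omega) (by omega) hy)
  have hzj : (X : K[X]) • z ∈ chain hΛ hn (E k l) j := by
    refine mem_chain_of_map_mem hΛ hn hf hfg hj ?_
    rw [LinearMap.map_smul_of_tower, hz, smul_sub, ← mul_smul, ← pow_two]
    refine sub_mem (chain_le hΛ hn hj le_rfl ((mem_chain_self hΛ hn).2 ⟨w, ?_, rfl⟩))
      (hsucc j (by omega) hj _ hy)
    exact chain_le hΛ hn (by omega) (by omega) hw
  obtain ⟨a, ha, b, hb, rfl⟩ := exists_correction hΛ hn hE hi hij hj hk hkl hl h hzi hzj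
  have hwi : w - f a ∈ chain hΛ hn B (i - 1) := sub_mem hw (map_mem_chain hΛ hn f ha)
  have hwj : (X : K[X]) • (w - f a) ∈ chain hΛ hn B (j - 1) := by
    have : (X : K[X]) • (w - f a) = y + f b := by
      rw [map_add, LinearMap.map_smul_of_tower] at hz
      rw [smul_sub, eq_add_of_sub_eq hz.symm]
      abel
    rw [this]
    exact add_mem hy (map_mem_chain hΛ hn f hb)
  have hgw' : g (w - f a) = generator hE hi hij hj := by
    have := map_add g (w - f a) (f a)
    rwa [sub_add_cancel, hgf, add_zero, hgw, eq_comm] at this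
  obtain ⟨ψ, hψ⟩ := exists_hom_of_mem_chain hΛ hn hE hi hij hj hwi hwj
  refine ⟨ψ, LinearMap.ext fun v => eq_of_row_smul hΛ hn fun m => ?_⟩
  obtain ⟨p, hp⟩ := exists_coord hE hi hij hj v m
  rw [LinearMap.comp_apply, ← map_smul, hψ v m p hp, LinearMap.map_smul_of_tower, hgw',
    LinearMap.id_apply, row_smul_eq_smul_generator hΛ hn hE hi hij hj v m p hp]
end Ext

theorem neg_mem_xPow {c : ℤ} {f : RatFunc K} (hf : f ∈ xPow K c) : -f ∈ xPow K c := by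
  obtain ⟨p, rfl⟩ := hf
  exact ⟨-p, by rw [map_neg, mul_neg]⟩

theorem X_pow_not_mem_xPow (e : ℕ) : (RatFunc.X : RatFunc K) ^ e ∉ xPow K ((e + 1 : ℕ) : ℤ) := by
  rw [mem_xPow_natCast]
  rintro ⟨p, hp⟩
  rw [← RatFunc.algebraMap_X, ← map_pow] at hp
  have h : (X : K[X]) ^ (e + 1) ∣ X ^ e := ⟨p, RatFunc.algebraMap_injective K hp⟩
  have := (pow_dvd_pow_iff X_ne_zero not_isUnit_X).1 h
  omega

/-- The cocycle defining a nonsplit extension of `(i, j)` by `(k, l)` when these cross. -/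
def twist (K : Type) [Field K] (i j k l m : ℕ) : RatFunc K :=
  if i ≤ m ∧ m < j then RatFunc.X ^ ((depth k l i : ℤ) - 1) else 0

theorem mul_twist_sub_mul_mem {i j k l : ℕ} (hi : 1 ≤ i) (hij : i < j) (hj : j ≤ n)
    (hk : 1 ≤ k) (hkl : k < l) (hl : l ≤ n) (h : Crossing (i, j) (k, l)) (m s : Fin n)
    {c b : RatFunc K} (hc : c ∈ xPow K (cExp n m s)) (hb : b ∈ xPow K (depth i j s)) :
    c * ((twist K i j k l m - twist K i j k l s) * b) ∈ xPow K (depth k l m) := by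
  have hs := s.2
  have hm := m.2
  have key : ∀ u ∈ xPow K ((depth k l i : ℤ) - 1), ¬ ((i ≤ m ∧ (m : ℕ) < j) ↔ (i ≤ s ∧ (s : ℕ) < j)) →
      c * (u * b) ∈ xPow K (depth k l m) := fun u hu hms => by
    refine mul_mem_xPow ?_ hc (mul_mem_xPow le_rfl hu hb)
    unfold Crossing at h
    simp only [cExp, depth]
    split_ifs <;> omega
  unfold twist
  split_ifs with h1 h2 h2
  · simpa using zero_mem_xPow _
  · rw [sub_zero]
    exact key _ (zpow_mem_xPow le_rfl) (by tauto)
  · rw [zero_sub]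
    exact key _ (neg_mem_xPow (zpow_mem_xPow le_rfl)) (by tauto)
  · simpa using zero_mem_xPow _

section Ext

variable {E : ℕ → ℕ → Submodule Λ (Fin n → RatFunc K)}
  (hE : ∀ i j : ℕ, 1 ≤ i → i < j → j ≤ n →
      (E i j : Set (Fin n → RatFunc K)) = ijSet K n i j)

include hE in
theorem mem_E_iff_xPow {i j : ℕ} (hi : 1 ≤ i) (hij : i < j) (hj : j ≤ n) {v : Fin n → RatFunc K} :
    v ∈ E i j ↔ ∀ k : Fin n, v k ∈ xPow K (depth i j k) := by
  simp only [mem_E hE hi hij hj, mem_xPow_natCast]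

include hE hΛ in
/-- The middle term of a nonsplit extension of `(i, j)` by `(k, l)` when these cross. -/
theorem exists_twisted {i j k l : ℕ} (hi : 1 ≤ i) (hij : i < j) (hj : j ≤ n)
    (hk : 1 ≤ k) (hkl : k < l) (hl : l ≤ n) (h : Crossing (i, j) (k, l)) :
    ∃ B : Submodule Λ ((Fin n → RatFunc K) × (Fin n → RatFunc K)), ∀ v, v ∈ B ↔ v.2 ∈ E i j ∧
      ∀ m : Fin n, v.1 m + twist K i j k l m * v.2 m ∈ xPow K (depth k l m) := by
  refine ⟨{ carrier := {v | v.2 ∈ E i j ∧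
              ∀ m : Fin n, v.1 m + twist K i j k l m * v.2 m ∈ xPow K (depth k l m)}
            add_mem' := ?_
            zero_mem' := ?_
            smul_mem' := ?_ }, fun v => Iff.rfl⟩
  · rintro u v ⟨hu, hu'⟩ ⟨hv, hv'⟩
    refine ⟨add_mem hu hv, fun m => ?_⟩
    have : (u + v).1 m + twist K i j k l m * (u + v).2 m =
        (u.1 m + twist K i j k l m * u.2 m) + (v.1 m + twist K i j k l m * v.2 m) := by
      simp only [Prod.fst_add, Prod.snd_add, Pi.add_apply]
      ring
    rw [this]
    exact add_mem_xPow (hu' m) (hv' m)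
  · exact ⟨zero_mem _, fun m => by simpa using zero_mem_xPow _⟩
  · rintro a v ⟨hv, hv'⟩
    refine ⟨Submodule.smul_mem _ a hv, fun m => ?_⟩
    have : (a • v).1 m + twist K i j k l m * (a • v).2 m =
        ∑ s, ((a : Matrix (Fin n) (Fin n) (RatFunc K)) m s *
          (v.1 s + twist K i j k l s * v.2 s) + (a : Matrix (Fin n) (Fin n) (RatFunc K)) m s *
            ((twist K i j k l m - twist K i j k l s) * v.2 s)) := by
      rw [Prod.smul_fst, Prod.smul_snd, coe_smul_apply, coe_smul_apply, mul_sum,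
        ← sum_add_distrib]
      exact sum_congr rfl fun s _ => by ring
    have ha : (a : Matrix (Fin n) (Fin n) (RatFunc K)) ∈ lambdaCarrier K n := by
      rw [← hΛ]
      exact a.2
    rw [this]
    refine sum_mem_xPow _ fun s _ => add_mem_xPow (mul_mem_xPow ?_ (ha m s) (hv' s))
      (mul_twist_sub_mul_mem hi hij hj hk hkl hl h m s (ha m s)
        ((mem_E_iff_xPow hE hi hij hj).1 hv s))
    have hs := s.2
    have hm := m.2
    simp only [cExp, depth]
    split_ifs <;> omega

include hE hΛ hn in
theorem not_splitsExt_of_crossing {i j k l : ℕ} (hi : 1 ≤ i) (hij : i < j) (hj : j ≤ n)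
    (hk : 1 ≤ k) (hkl : k < l) (hl : l ≤ n) (h : Crossing (i, j) (k, l)) :
    ¬ SplitsExt Λ (E k l) (E i j) := by
  intro hsplit
  obtain ⟨B, hB⟩ := exists_twisted hΛ hE hi hij hj hk hkl hl h
  let f : E k l →ₗ[Λ] B := ((LinearMap.inl Λ _ _) ∘ₗ (E k l).subtype).codRestrict B fun v =>
    (hB _).2 ⟨zero_mem _, fun m => by simpa using (mem_E_iff_xPow hE hk hkl hl).1 v.2 m⟩
  let g : B →ₗ[Λ] E i j := ((LinearMap.snd Λ _ _) ∘ₗ B.subtype).codRestrict (E i j) fun v =>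
    ((hB _).1 v.2).1
  have hf : Function.Injective f := fun u v huv =>
    Subtype.ext (congrArg Prod.fst (congrArg Subtype.val huv))
  have hg : Function.Surjective g := fun v =>
    ⟨⟨(fun m => -(twist K i j k l m * (v : Fin n → RatFunc K) m), v), (hB _).2 ⟨v.2, fun m => by
      simpa using zero_mem_xPow _⟩⟩, rfl⟩
  have hfg : LinearMap.range f = LinearMap.ker g := by
    ext v
    constructor
    · rintro ⟨u, rfl⟩
      rfl
    · intro hv
      have hv2 : (v : (Fin n → RatFunc K) × (Fin n → RatFunc K)).2 = 0 := congrArg Subtype.val hv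
      have hv1 : (v : (Fin n → RatFunc K) × (Fin n → RatFunc K)).1 ∈ E k l := by
        refine (mem_E_iff_xPow hE hk hkl hl).2 fun m => ?_
        have := ((hB _).1 v.2).2 m
        rwa [hv2, Pi.zero_apply, mul_zero, add_zero] at this
      exact ⟨⟨_, hv1⟩, Subtype.ext (Prod.ext rfl hv2.symm)⟩
  obtain ⟨sec, hsec⟩ := hsplit (ModuleCat.of Λ B) f g hf hg hfg
  obtain ⟨q, hq⟩ := exists_scalar hΛ hn hE hi hij hj
    ((LinearMap.fst Λ _ _) ∘ₗ B.subtype ∘ₗ sec)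
  have key : ∀ (v : E i j) (m : Fin n), q * (v : Fin n → RatFunc K) m +
      twist K i j k l m * (v : Fin n → RatFunc K) m ∈ xPow K (depth k l m) := fun v m => by
    have h1 := ((hB _).1 (sec v).2).2 m
    have h2 : (sec v).1.2 = (v : Fin n → RatFunc K) :=
      congrArg Subtype.val (LinearMap.congr_fun hsec v)
    have h3 : (sec v).1.1 m = q * (v : Fin n → RatFunc K) m := hq v m
    rwa [h2, h3] at h1
  obtain ⟨u, hu⟩ := exists_mem_E_apply_eq hE hi hij hj ⟨i - 1, by omega⟩ 1
  obtain ⟨v, hv⟩ := exists_mem_E_apply_eq hE hi hij hj ⟨j - 1, by omega⟩ 1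
  have hu' := key u ⟨i - 1, by omega⟩
  have hv' := key v ⟨j - 1, by omega⟩
  have d1 : depth k l (i - 1) = depth k l i := by
    unfold Crossing at h
    simp only [depth]
    split_ifs <;> omega
  have d2 : depth k l (j - 1) = depth k l i + 1 := by
    unfold Crossing at h
    simp only [depth]
    split_ifs <;> omega
  have d3 : depth i j (i - 1) = 0 := by simp [depth, show i - 1 < i by omega]
  have d4 : depth i j (j - 1) = 1 := by
    simp [depth, show ¬ j - 1 < i by omega, show j - 1 < j by omega]
  rw [hu] at hu'
  rw [hv] at hv'
  simp only [twist, d1, d2, d3, d4, show ¬ (i ≤ i - 1 ∧ i - 1 < j) by omega,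
    show i ≤ j - 1 ∧ j - 1 < j by omega, if_true, if_false, and_self, add_zero, pow_zero,
    mul_one, map_one, pow_one, RatFunc.algebraMap_X] at hu' hv'
  have hX : (RatFunc.X : RatFunc K) ≠ 0 := RatFunc.X_ne_zero
  have hX1 : (RatFunc.X : RatFunc K) ∈ xPow K 1 := by
    simpa using zpow_mem_xPow (K := K) (le_refl (1 : ℤ))
  have h1 : q * RatFunc.X ∈ xPow K ((depth k l i + 1 : ℕ) : ℤ) :=
    mul_mem_xPow (by push_cast; rfl) hu' hX1
  have h2 := add_mem_xPow hv' (neg_mem_xPow h1)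
  refine X_pow_not_mem_xPow (K := K) (depth k l i) ?_
  rw [zpow_sub₀ hX, zpow_one, zpow_natCast, div_mul_cancel₀ _ hX, add_neg_cancel_comm] at h2
  exact h2

end Ext

/-- `X` is a direct summand of `M`. -/
def IsRetract (Λ : Subalgebra K[X] (Matrix (Fin n) (Fin n) (RatFunc K))) (A M : Type)
    [AddCommGroup A] [Module Λ A] [AddCommGroup M] [Module Λ M] : Prop :=
  ∃ (i : A →ₗ[Λ] M) (p : M →ₗ[Λ] A), p ∘ₗ i = LinearMap.id

section Retract

variable {A M N : Type} [AddCommGroup A] [Module Λ A] [AddCommGroup M] [Module Λ M]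
  [AddCommGroup N] [Module Λ N]

theorem IsRetract.of_equiv (e : A ≃ₗ[Λ] M) : IsRetract Λ A M :=
  ⟨e, e.symm, LinearMap.ext fun _ => e.symm_apply_apply _⟩

theorem IsRetract.trans (h : IsRetract Λ A M) (h' : IsRetract Λ M N) : IsRetract Λ A N := by
  obtain ⟨i, p, h⟩ := h
  obtain ⟨i', p', h'⟩ := h'
  refine ⟨i' ∘ₗ i, p ∘ₗ p', LinearMap.ext fun x => ?_⟩
  have h1 := LinearMap.congr_fun h' (i x)
  have h2 := LinearMap.congr_fun h x
  simp only [LinearMap.comp_apply, LinearMap.id_apply] at h1 h2 ⊢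
  rw [h1, h2]

theorem IsRetract.fst : IsRetract Λ M (M × N) :=
  ⟨LinearMap.inl Λ M N, LinearMap.fst Λ M N, LinearMap.ext fun _ => rfl⟩

theorem IsRetract.prod_self (h : IsRetract Λ A M) : IsRetract Λ (A × A) (M × M) := by
  obtain ⟨i, p, h⟩ := h
  exact ⟨i.prodMap i, p.prodMap p, LinearMap.ext fun x =>
    Prod.ext (LinearMap.congr_fun h x.1) (LinearMap.congr_fun h x.2)⟩

theorem IsRetract.exists_equiv (h : IsRetract Λ A M) :
    ∃ W : ModuleCat.{0} Λ, Nonempty (M ≃ₗ[Λ] (A × W)) := by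
  obtain ⟨i, p, h⟩ := h
  have hp : ∀ x, p (i x) = x := LinearMap.congr_fun h
  refine ⟨ModuleCat.of Λ (LinearMap.ker p), ⟨LinearEquiv.ofBijective
    (p.prod ((LinearMap.id - i ∘ₗ p).codRestrict (LinearMap.ker p) fun x => ?_)) ⟨?_, ?_⟩⟩⟩
  · refine (injective_iff_map_eq_zero _).2 fun x hx => ?_
    have h1 : p x = 0 := congrArg Prod.fst hx
    have h2 : x - i (p x) = 0 := congrArg Subtype.val (congrArg Prod.snd hx)
    rwa [h1, map_zero, sub_zero] at h2
  · rintro ⟨a, k, hk⟩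
    have hk' : p k = 0 := hk
    refine ⟨i a + k, Prod.ext ?_ (Subtype.ext ?_)⟩
    · simp [hp, hk']
    · simp [hp, hk']
  · simp [hp]

theorem inAdd_iff_isRetract : InAdd Λ M A ↔ ∃ m : ℕ, IsRetract Λ A (Fin m → M) := by
  constructor
  · rintro ⟨m, W, ⟨e⟩⟩
    exact ⟨m, IsRetract.fst.trans (.of_equiv e.symm)⟩
  · rintro ⟨m, h⟩
    exact ⟨m, h.exists_equiv⟩

theorem isBasic_iff : IsBasic Λ M ↔
    ∀ A : ModuleCat.{0} Λ, Nontrivial A → ¬ IsRetract Λ (A × A) M := by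
  constructor
  · intro h A hA hr
    obtain ⟨W, ⟨e⟩⟩ := hr.exists_equiv
    exact h ⟨A, W, hA, ⟨e.trans (LinearEquiv.prodAssoc Λ A A W)⟩⟩
  · rintro h ⟨A, W, hA, ⟨e⟩⟩
    exact h A hA (IsRetract.fst.trans (.of_equiv (e.trans (LinearEquiv.prodAssoc Λ A A W).symm).symm))

variable {ι : Type} {P Q : ι → Type} [∀ a, AddCommGroup (P a)] [∀ a, Module Λ (P a)]
  [∀ a, AddCommGroup (Q a)] [∀ a, Module Λ (Q a)]

theorem IsRetract.eval (a : ι) : IsRetract Λ (P a) (∀ a, P a) := by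
  classical
  exact ⟨LinearMap.single Λ P a, LinearMap.proj a, LinearMap.ext fun x => by simp⟩

theorem IsRetract.pi (h : ∀ a, IsRetract Λ (P a) (Q a)) : IsRetract Λ (∀ a, P a) (∀ a, Q a) := by
  choose i p h using h
  exact ⟨LinearMap.pi fun a => i a ∘ₗ LinearMap.proj a, LinearMap.pi fun a => p a ∘ₗ LinearMap.proj a,
    LinearMap.ext fun x => funext fun a => LinearMap.congr_fun (h a) (x a)⟩

end Retract

section Split

variable {Z Z' W W' B : Type} [AddCommGroup Z] [Module Λ Z] [AddCommGroup Z'] [Module Λ Z']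
  [AddCommGroup W] [Module Λ W] [AddCommGroup W'] [Module Λ W'] [AddCommGroup B] [Module Λ B]

theorem exists_section_iff_exists_retraction {f : Z →ₗ[Λ] B} {g : B →ₗ[Λ] W}
    (hf : Function.Injective f) (hg : Function.Surjective g)
    (hfg : LinearMap.range f = LinearMap.ker g) :
    (∃ s, g ∘ₗ s = LinearMap.id) ↔ ∃ r, r ∘ₗ f = LinearMap.id :=
  ((LinearMap.exact_iff.2 hfg.symm).split_tfae hf hg).out 0 1

theorem _root_.SplitsExt.exists_lift (h : SplitsExt Λ Z W) {f : Z →ₗ[Λ] B} {g : B →ₗ[Λ] W'}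
    (hf : Function.Injective f) (hg : Function.Surjective g)
    (hfg : LinearMap.range f = LinearMap.ker g) (u : W →ₗ[Λ] W') : ∃ s, g ∘ₗ s = u := by
  have hgf : ∀ z, g (f z) = 0 := fun z => by
    rw [← LinearMap.mem_ker, ← hfg]
    exact ⟨z, rfl⟩
  let P : Submodule Λ (B × W) :=
    LinearMap.eqLocus (g ∘ₗ LinearMap.fst Λ B W) (u ∘ₗ LinearMap.snd Λ B W)
  have hP : ∀ x : P, g x.1.1 = u x.1.2 := fun x => x.2
  let f' : Z →ₗ[Λ] P := ((LinearMap.inl Λ B W) ∘ₗ f).codRestrict P fun z => by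
    change g (f z) = u 0
    rw [hgf, map_zero]
  let g' : P →ₗ[Λ] W := LinearMap.snd Λ B W ∘ₗ P.subtype
  obtain ⟨s, hs⟩ := h (ModuleCat.of Λ P) f' g'
    (fun x y hxy => hf (congrArg Prod.fst (congrArg Subtype.val hxy)))
    (fun w => by
      obtain ⟨b, hb⟩ := hg (u w)
      exact ⟨⟨(b, w), hb⟩, rfl⟩)
    (by
      ext x
      constructor
      · rintro ⟨z, rfl⟩
        rfl
      · intro hx
        have hx' : x.1.2 = 0 := hx
        have hker : x.1.1 ∈ LinearMap.ker g := by
          rw [LinearMap.mem_ker, hP x, hx', map_zero]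
        rw [← hfg] at hker
        obtain ⟨z, hz⟩ := hker
        exact ⟨z, Subtype.ext (Prod.ext hz hx'.symm)⟩)
  refine ⟨LinearMap.fst Λ B W ∘ₗ P.subtype ∘ₗ s, LinearMap.ext fun w => ?_⟩
  have h1 : (s w).1.2 = w := LinearMap.congr_fun hs w
  have h2 := hP (s w)
  rw [h1] at h2
  exact h2

theorem _root_.SplitsExt.exists_extension (h : SplitsExt Λ Z W) {f : Z' →ₗ[Λ] B} {g : B →ₗ[Λ] W}
    (hf : Function.Injective f) (hg : Function.Surjective g)
    (hfg : LinearMap.range f = LinearMap.ker g) (u : Z' →ₗ[Λ] Z) : ∃ r, r ∘ₗ f = u := by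
  have hgf : ∀ z, g (f z) = 0 := fun z => by
    rw [← LinearMap.mem_ker, ← hfg]
    exact ⟨z, rfl⟩
  let P : Submodule Λ (B × Z) := LinearMap.range (f.prod (-u))
  let f' : Z →ₗ[Λ] (B × Z) ⧸ P := P.mkQ ∘ₗ LinearMap.inr Λ B Z
  let g' : (B × Z) ⧸ P →ₗ[Λ] W := P.liftQ (g ∘ₗ LinearMap.fst Λ B Z) (by
    rintro _ ⟨z, rfl⟩
    exact hgf z)
  have hf' : Function.Injective f' := by
    refine (injective_iff_map_eq_zero _).2 fun z hz => ?_
    obtain ⟨z', hz'⟩ := (Submodule.Quotient.mk_eq_zero P).1 hz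
    have h1 : f z' = 0 := congrArg Prod.fst hz'
    have h2 : -u z' = z := congrArg Prod.snd hz'
    rw [← h2, hf (h1.trans (map_zero f).symm), map_zero, neg_zero]
  have hg' : Function.Surjective g' := fun w => by
    obtain ⟨b, rfl⟩ := hg w
    exact ⟨P.mkQ (b, 0), rfl⟩
  have hfg' : LinearMap.range f' = LinearMap.ker g' := by
    ext x
    obtain ⟨⟨b, z⟩, rfl⟩ := P.mkQ_surjective x
    constructor
    · rintro ⟨y, hy⟩
      rw [← hy]
      exact map_zero g
    · intro hx
      have hb : b ∈ LinearMap.ker g := hx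
      rw [← hfg] at hb
      obtain ⟨z', rfl⟩ := hb
      refine ⟨z + u z', (Submodule.Quotient.eq P).2 ⟨-z', ?_⟩⟩
      simp
  obtain ⟨r, hr⟩ := (exists_section_iff_exists_retraction hf' hg' hfg').1
    (h (ModuleCat.of Λ ((B × Z) ⧸ P)) f' g' hf' hg' hfg')
  refine ⟨r ∘ₗ P.mkQ ∘ₗ LinearMap.inl Λ B Z, LinearMap.ext fun z => ?_⟩
  have h1 : P.mkQ (f z, 0) = f' (u z) := (Submodule.Quotient.eq P).2 ⟨z, by simp⟩
  have h2 : r (f' (u z)) = u z := LinearMap.congr_fun hr (u z)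
  rw [← h2, ← h1]
  rfl

theorem _root_.SplitsExt.of_isRetract (h : SplitsExt Λ Z W) (hZ : IsRetract Λ Z' Z)
    (hW : IsRetract Λ W' W) : SplitsExt Λ Z' W' := by
  obtain ⟨i, p, hip⟩ := hW
  obtain ⟨i', p', hip'⟩ := hZ
  have h1 : SplitsExt Λ Z W' := fun B f g hf hg hfg => by
    obtain ⟨s, hs⟩ := h.exists_lift hf hg hfg p
    exact ⟨s ∘ₗ i, by rw [← LinearMap.comp_assoc, hs, hip]⟩
  intro B f g hf hg hfg
  obtain ⟨r, hr⟩ := h1.exists_extension hf hg hfg i'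
  exact (exists_section_iff_exists_retraction hf hg hfg).2
    ⟨p' ∘ₗ r, by rw [LinearMap.comp_assoc, hr, hip']⟩

variable {ι κ : Type} [Finite ι] {P : ι → Type} {Q : κ → Type} [∀ a, AddCommGroup (P a)]
  [∀ a, Module Λ (P a)] [∀ b, AddCommGroup (Q b)] [∀ b, Module Λ (Q b)]

theorem _root_.SplitsExt.pi_right (h : ∀ a, SplitsExt Λ Z (P a)) : SplitsExt Λ Z (∀ a, P a) := by
  classical
  have := Fintype.ofFinite ι
  intro B f g hf hg hfg
  choose s hs using fun a => (h a).exists_lift hf hg hfg (LinearMap.single Λ P a)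
  refine ⟨∑ a, s a ∘ₗ LinearMap.proj a, LinearMap.ext fun x => ?_⟩
  have h1 : ∀ a, g (s a (x a)) = Pi.single a (x a) := fun a => LinearMap.congr_fun (hs a) (x a)
  simp only [LinearMap.comp_apply, LinearMap.sum_apply, LinearMap.proj_apply, map_sum, h1,
    LinearMap.id_apply]
  exact Finset.univ_sum_single x

theorem _root_.SplitsExt.pi_left (h : ∀ b, SplitsExt Λ (Q b) W) : SplitsExt Λ (∀ b, Q b) W := by
  intro B f g hf hg hfg
  choose r hr using fun b => (h b).exists_extension hf hg hfg (LinearMap.proj b)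
  exact (exists_section_iff_exists_retraction hf hg hfg).2 ⟨LinearMap.pi r,
    LinearMap.ext fun x => funext fun b => LinearMap.congr_fun (hr b) x⟩

end Split

section Scalars

variable {E : ℕ → ℕ → Submodule Λ (Fin n → RatFunc K)}
  (hE : ∀ i j : ℕ, 1 ≤ i → i < j → j ≤ n →
      (E i j : Set (Fin n → RatFunc K)) = ijSet K n i j)

/-- The map `f` is multiplication by the polynomial `c`. -/
def IsScalar {i j k l : ℕ} (f : E i j →ₗ[Λ] E k l) (c : K[X]) : Prop :=
  ∀ (v : E i j) (t : Fin n), (f v : Fin n → RatFunc K) t =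
    algebraMap K[X] (RatFunc K) c * (v : Fin n → RatFunc K) t

theorem IsScalar.comp {i j k l r s : ℕ} {f : E i j →ₗ[Λ] E k l} {g : E k l →ₗ[Λ] E r s}
    {c d : K[X]} (hf : IsScalar f c) (hg : IsScalar g d) : IsScalar (g ∘ₗ f) (d * c) := by
  intro v t
  rw [LinearMap.comp_apply, hg, hf, map_mul, mul_assoc]

theorem IsScalar.sum {ι : Type} [Fintype ι] {i j k l : ℕ} {f : ι → (E i j →ₗ[Λ] E k l)}
    {c : ι → K[X]} (hf : ∀ a, IsScalar (f a) (c a)) : IsScalar (∑ a, f a) (∑ a, c a) := by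
  intro v t
  rw [LinearMap.sum_apply, Submodule.coe_sum, Finset.sum_apply, map_sum, Finset.sum_mul]
  exact Finset.sum_congr rfl fun a _ => hf a v t

variable {i j k l : ℕ} (hi : 1 ≤ i) (hij : i < j) (hj : j ≤ n)
  (hk : 1 ≤ k) (hkl : k < l) (hl : l ≤ n)

include hn hE hi hij hj

theorem IsScalar.unique {f : E i j →ₗ[Λ] E k l} {c d : K[X]} (hc : IsScalar f c)
    (hd : IsScalar f d) : c = d := by
  obtain ⟨v, hv⟩ := exists_mem_E_apply_eq hE hi hij hj ⟨0, by omega⟩ 1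
  have h := (hc v ⟨0, by omega⟩).symm.trans (hd v ⟨0, by omega⟩)
  rw [hv] at h
  simpa [depth, show 0 < i by omega] using h

include hΛ hk hkl hl

theorem exists_isScalar (f : E i j →ₗ[Λ] E k l) : ∃ c : K[X], IsScalar f c := by
  obtain ⟨q, hq⟩ := exists_scalar hΛ hn hE hi hij hj ((E k l).subtype ∘ₗ f)
  obtain ⟨v, hv⟩ := exists_mem_E_apply_eq hE hi hij hj ⟨0, by omega⟩ 1
  obtain ⟨c, hc⟩ := exists_coord hE hk hkl hl (f v) ⟨0, by omega⟩
  have h : (f v : Fin n → RatFunc K) ⟨0, by omega⟩ = q * (v : Fin n → RatFunc K) ⟨0, by omega⟩ :=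
    hq v _
  rw [hv, hc] at h
  simp only [depth, show 0 < i by omega, if_true, pow_zero, map_one, mul_one] at h
  exact ⟨c, fun v t => h ▸ hq v t⟩

omit hΛ hn in
theorem X_pow_depth_dvd {f : E i j →ₗ[Λ] E k l} {c : K[X]} (hc : IsScalar f c) (t : Fin n) :
    X ^ depth k l t ∣ c * X ^ depth i j t := by
  obtain ⟨v, hv⟩ := exists_mem_E_apply_eq hE hi hij hj t 1
  obtain ⟨d, hd⟩ := (mem_E hE hk hkl hl).1 (f v).2 t
  have h := hc v t
  rw [hv, hd, ← map_mul, mul_one] at h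
  exact ⟨d, (RatFunc.algebraMap_injective K h).symm⟩

omit hΛ hn in
theorem X_dvd_of_depth_lt {f : E i j →ₗ[Λ] E k l} {c : K[X]} (hc : IsScalar f c) {t : Fin n}
    (h : depth i j t < depth k l t) : X ∣ c := by
  have h1 : X ^ (depth i j t + 1) ∣ c * X ^ depth i j t :=
    (pow_dvd_pow X h).trans (X_pow_depth_dvd hE hi hij hj hk hkl hl hc t)
  rw [pow_succ', mul_dvd_mul_iff_right (pow_ne_zero _ X_ne_zero)] at h1
  exact h1

omit hΛ hn hE hi hk in
theorem exists_depth_ne (h : (i, j) ≠ (k, l)) : ∃ t : Fin n, depth i j t ≠ depth k l t := by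
  rw [Ne, Prod.mk.injEq] at h
  rcases lt_trichotomy i k with h1 | h1 | h1
  · refine ⟨⟨i, by omega⟩, ?_⟩
    simp only [depth]
    split_ifs <;> omega
  · rcases lt_trichotomy j l with h2 | h2 | h2
    · refine ⟨⟨j, by omega⟩, ?_⟩
      simp only [depth]
      split_ifs <;> omega
    · exact absurd ⟨h1, h2⟩ h
    · refine ⟨⟨l, by omega⟩, ?_⟩
      simp only [depth]
      split_ifs <;> omega
  · refine ⟨⟨k, by omega⟩, ?_⟩
    simp only [depth]
    split_ifs <;> omega

omit hΛ hn in
theorem X_dvd_mul_of_ne {f : E i j →ₗ[Λ] E k l} {g : E k l →ₗ[Λ] E i j} {c d : K[X]}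
    (hc : IsScalar f c) (hd : IsScalar g d) (h : (i, j) ≠ (k, l)) : X ∣ d * c := by
  obtain ⟨t, ht⟩ := exists_depth_ne hij hj hkl hl h
  rcases lt_or_gt_of_ne ht with h1 | h1
  · exact (X_dvd_of_depth_lt hE hi hij hj hk hkl hl hc h1).mul_left _
  · exact (X_dvd_of_depth_lt hE hk hkl hl hi hij hj hd h1).mul_right _

end Scalars

section Products

variable {E : ℕ → ℕ → Submodule Λ (Fin n → RatFunc K)}
  (hE : ∀ i j : ℕ, 1 ≤ i → i < j → j ≤ n →
      (E i j : Set (Fin n → RatFunc K)) = ijSet K n i j)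
  {ι : Type} {q : ι → ℕ × ℕ}
  (hq : ∀ a, 1 ≤ (q a).1 ∧ (q a).1 < (q a).2 ∧ (q a).2 ≤ n)
  {p : ℕ × ℕ} (hp : 1 ≤ p.1 ∧ p.1 < p.2 ∧ p.2 ≤ n)

include hΛ hn hE hq hp

theorem exists_isScalar_proj (f : E p.1 p.2 →ₗ[Λ] ∀ a, E (q a).1 (q a).2) :
    ∃ c : ι → K[X], ∀ a, IsScalar (LinearMap.proj a ∘ₗ f) (c a) := by
  choose c hc using fun a => exists_isScalar hΛ hn hE hp.1 hp.2.1 hp.2.2 (hq a).1 (hq a).2.1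
    (hq a).2.2 (LinearMap.proj a ∘ₗ f)
  exact ⟨c, hc⟩

variable [Fintype ι] [DecidableEq ι]

omit [Fintype ι] in
theorem exists_isScalar_single (g : (∀ a, E (q a).1 (q a).2) →ₗ[Λ] E p.1 p.2) :
    ∃ d : ι → K[X], ∀ a, IsScalar
      (g ∘ₗ LinearMap.single Λ (fun a => ↥(E (q a).1 (q a).2)) a) (d a) := by
  choose c hc using fun a => exists_isScalar hΛ hn hE (hq a).1 (hq a).2.1 (hq a).2.2 hp.1 hp.2.1
    hp.2.2 (g ∘ₗ LinearMap.single Λ (fun a => ↥(E (q a).1 (q a).2)) a)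
  exact ⟨c, hc⟩

omit hΛ in
/-- The residue modulo `x` of the scalar of an endomorphism of `(i,j)` factoring through a direct
sum only depends on the components isomorphic to `(i,j)`. -/
theorem coeff_zero_eq_sum {f : E p.1 p.2 →ₗ[Λ] ∀ a, E (q a).1 (q a).2}
    {g : (∀ a, E (q a).1 (q a).2) →ₗ[Λ] E p.1 p.2} {c d : ι → K[X]} {e : K[X]}
    (hc : ∀ a, IsScalar (LinearMap.proj a ∘ₗ f) (c a))
    (hd : ∀ a, IsScalar (g ∘ₗ LinearMap.single Λ (fun a => ↥(E (q a).1 (q a).2)) a) (d a))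
    (he : IsScalar (g ∘ₗ f) e) :
    e.coeff 0 = ∑ a with q a = p, (d a).coeff 0 * (c a).coeff 0 := by
  have h1 : IsScalar (g ∘ₗ f) (∑ a, d a * c a) := by
    have : g ∘ₗ f = ∑ a, (g ∘ₗ LinearMap.single Λ (fun a => ↥(E (q a).1 (q a).2)) a) ∘ₗ
        (LinearMap.proj a ∘ₗ f) := by
      ext1 v
      simp only [LinearMap.sum_apply, LinearMap.comp_apply, LinearMap.proj_apply,
        LinearMap.single_apply]
      rw [← map_sum]
      exact congrArg g (Finset.univ_sum_single (f v)).symm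
    rw [this]
    exact IsScalar.sum fun a => (hc a).comp (hd a)
  rw [IsScalar.unique hn hE hp.1 hp.2.1 hp.2.2 he h1, finsetSum_coeff, Finset.sum_filter]
  refine Finset.sum_congr rfl fun a _ => ?_
  split_ifs with h
  · exact mul_coeff_zero _ _
  · exact X_dvd_iff.1 (X_dvd_mul_of_ne hE hp.1 hp.2.1 hp.2.2 (hq a).1 (hq a).2.1 (hq a).2.2
      (hc a) (hd a) fun h' => h h'.symm)

omit [Fintype ι] [DecidableEq ι] in
theorem exists_eq_of_isRetract [Finite ι]
    (h : IsRetract Λ (E p.1 p.2) (∀ a, E (q a).1 (q a).2)) : ∃ a, q a = p := by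
  classical
  have := Fintype.ofFinite ι
  obtain ⟨f, g, hgf⟩ := h
  obtain ⟨c, hc⟩ := exists_isScalar_proj hΛ hn hE hq hp f
  obtain ⟨d, hd⟩ := exists_isScalar_single hΛ hn hE hq hp g
  have h1 := coeff_zero_eq_sum hn hE hq hp (e := 1) hc hd (fun v t => by simp [hgf])
  by_contra! h2
  rw [Finset.filter_false_of_mem fun a _ => h2 a, Finset.sum_empty, coeff_one_zero] at h1
  exact one_ne_zero h1

omit [Fintype ι] [DecidableEq ι] in
theorem not_isRetract_prod_self [Finite ι] (hinj : Function.Injective q) :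
    ¬ IsRetract Λ (E p.1 p.2 × E p.1 p.2) (∀ a, E (q a).1 (q a).2) := by
  classical
  have := Fintype.ofFinite ι
  intro h
  obtain ⟨a, ha⟩ := exists_eq_of_isRetract hΛ hn hE hq hp (IsRetract.fst.trans h)
  obtain ⟨f, g, hgf⟩ := h
  have hs : (Finset.univ.filter fun b => q b = p) = {a} := by
    ext b
    simp only [Finset.mem_filter, Finset.mem_univ, true_and, Finset.mem_singleton]
    exact ⟨fun hb => hinj (hb.trans ha.symm), fun hb => hb ▸ ha⟩
  let f₁ := f ∘ₗ LinearMap.inl Λ (E p.1 p.2) (E p.1 p.2)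
  let f₂ := f ∘ₗ LinearMap.inr Λ (E p.1 p.2) (E p.1 p.2)
  let g₁ := LinearMap.fst Λ (E p.1 p.2) (E p.1 p.2) ∘ₗ g
  let g₂ := LinearMap.snd Λ (E p.1 p.2) (E p.1 p.2) ∘ₗ g
  have hgf' : ∀ x, g (f x) = x := LinearMap.congr_fun hgf
  obtain ⟨c₁, hc₁⟩ := exists_isScalar_proj hΛ hn hE hq hp f₁
  obtain ⟨c₂, hc₂⟩ := exists_isScalar_proj hΛ hn hE hq hp f₂
  obtain ⟨d₁, hd₁⟩ := exists_isScalar_single hΛ hn hE hq hp g₁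
  obtain ⟨d₂, hd₂⟩ := exists_isScalar_single hΛ hn hE hq hp g₂
  have h11 := coeff_zero_eq_sum hn hE hq hp (e := 1) hc₁ hd₁
    (fun v t => by simp [f₁, g₁, hgf'])
  have h22 := coeff_zero_eq_sum hn hE hq hp (e := 1) hc₂ hd₂
    (fun v t => by simp [f₂, g₂, hgf'])
  have h12 := coeff_zero_eq_sum hn hE hq hp (e := 0) hc₂ hd₁
    (fun v t => by simp [f₂, g₁, hgf'])
  rw [hs, Finset.sum_singleton] at h11 h22 h12
  rw [coeff_one_zero] at h11 h22
  rw [coeff_zero] at h12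
  rcases mul_eq_zero.1 h12.symm with h0 | h0
  · rw [h0, zero_mul] at h11
    exact one_ne_zero h11
  · rw [h0, mul_zero] at h22
    exact one_ne_zero h22

end Products

section Classification

variable {E : ℕ → ℕ → Submodule Λ (Fin n → RatFunc K)}
  (hE : ∀ i j : ℕ, 1 ≤ i → i < j → j ≤ n →
      (E i j : Set (Fin n → RatFunc K)) = ijSet K n i j)

include hΛ hn hE

omit hΛ in
theorem nontrivial_E {i j : ℕ} (hi : 1 ≤ i) (hij : i < j) (hj : j ≤ n) : Nontrivial (E i j) := by
  obtain ⟨v, hv⟩ := exists_mem_E_apply_eq hE hi hij hj ⟨0, by omega⟩ 1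
  refine ⟨⟨v, 0, fun h => ?_⟩⟩
  simp [h, depth, show 0 < i by omega] at hv

theorem exists_isRetract {M : Type} [AddCommGroup M] [Module Λ M] (hM : IsCMMod Λ M)
    [Nontrivial M] :
    ∃ p : ℕ × ℕ, (1 ≤ p.1 ∧ p.1 < p.2 ∧ p.2 ≤ n) ∧ IsRetract Λ (E p.1 p.2) M := by
  obtain ⟨p, hp, f, g, hgf⟩ := exists_retract hΛ hn hE hM
  exact ⟨p, hp, f, g, LinearMap.ext fun v => LinearMap.congr_fun hgf v⟩

omit hΛ hn hE in
theorem finrank_lt_of_equiv_prod {M A W : Type} [AddCommGroup M] [Module Λ M] [AddCommGroup A]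
    [Module Λ A] [AddCommGroup W] [Module Λ W] [Module K[X] M] [IsScalarTower K[X] Λ M]
    [Module K[X] W] [IsScalarTower K[X] Λ W] [Nontrivial A] (hM : IsCMMod Λ M)
    (e : M ≃ₗ[Λ] (A × W)) : Module.finrank K[X] W < Module.finrank K[X] M := by
  let : Module K[X] A := Module.compHom A (algebraMap K[X] Λ)
  have : IsScalarTower K[X] Λ A := .of_algebraMap_smul fun _ _ => rfl
  obtain ⟨_, _⟩ := (isCMMod_iff W).1 (hM.of_injective
    (e.symm.toLinearMap ∘ₗ LinearMap.inr Λ A W) (e.symm.injective.comp LinearMap.inr_injective))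
  obtain ⟨_, _⟩ := (isCMMod_iff A).1 (hM.of_injective
    (e.symm.toLinearMap ∘ₗ LinearMap.inl Λ A W) (e.symm.injective.comp LinearMap.inl_injective))
  rw [(e.restrictScalars K[X]).finrank_eq, Module.finrank_prod, Nat.lt_add_left_iff_pos]
  exact Module.finrank_pos

theorem exists_equiv_pi_aux (r : ℕ) : ∀ {M : Type} [AddCommGroup M] [Module Λ M] [Module K[X] M]
    [IsScalarTower K[X] Λ M] (_ : IsCMMod Λ M) (_ : Module.finrank K[X] M ≤ r),
    ∃ (ι : Type) (_ : Finite ι) (q : ι → ℕ × ℕ),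
      (∀ a, 1 ≤ (q a).1 ∧ (q a).1 < (q a).2 ∧ (q a).2 ≤ n) ∧
      Nonempty (M ≃ₗ[Λ] ∀ a, E (q a).1 (q a).2) := by
  induction r with
  | zero =>
    intro M _ _ _ _ hM hr
    obtain ⟨_, _⟩ := (isCMMod_iff M).1 hM
    rcases subsingleton_or_nontrivial M with h | h
    · exact ⟨Empty, inferInstance, Empty.elim, fun a => a.elim, ⟨LinearEquiv.ofSubsingleton _ _⟩⟩
    · exact absurd (Module.finrank_pos (R := K[X]) (M := M)) (by omega)
  | succ r ih =>
    intro M _ _ _ _ hM hr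
    rcases subsingleton_or_nontrivial M with h | h
    · exact ⟨Empty, inferInstance, Empty.elim, fun a => a.elim, ⟨LinearEquiv.ofSubsingleton _ _⟩⟩
    obtain ⟨p, hp, hret⟩ := exists_isRetract hΛ hn hE hM
    obtain ⟨W, ⟨e⟩⟩ := hret.exists_equiv
    let : Module K[X] W := Module.compHom W (algebraMap K[X] Λ)
    have : IsScalarTower K[X] Λ W := .of_algebraMap_smul fun _ _ => rfl
    have hW : IsCMMod Λ W := hM.of_injective (e.symm.toLinearMap ∘ₗ LinearMap.inr Λ _ W)
      (e.symm.injective.comp LinearMap.inr_injective)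
    have := nontrivial_E hn hE hp.1 hp.2.1 hp.2.2
    have hlt := finrank_lt_of_equiv_prod hM e
    obtain ⟨ι, hι, q, hq, ⟨e'⟩⟩ := ih hW (by omega)
    let q' : Option ι → ℕ × ℕ := fun a => a.elim p q
    refine ⟨Option ι, inferInstance, q', fun a => ?_, ⟨?_⟩⟩
    · cases a with
      | none => exact hp
      | some a => exact hq a
    · exact (e.trans ((LinearEquiv.refl Λ _).prodCongr e')).trans
        (LinearEquiv.piOptionEquivProd Λ (M := fun a => ↥(E (q' a).1 (q' a).2))).symm

/-- Every Cohen–Macaulay module is a finite direct sum of modules `(i,j)`. -/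
theorem exists_equiv_pi {M : Type} [AddCommGroup M] [Module Λ M] (hM : IsCMMod Λ M) :
    ∃ (ι : Type) (_ : Finite ι) (q : ι → ℕ × ℕ),
      (∀ a, 1 ≤ (q a).1 ∧ (q a).1 < (q a).2 ∧ (q a).2 ≤ n) ∧
      Nonempty (M ≃ₗ[Λ] ∀ a, E (q a).1 (q a).2) := by
  let : Module K[X] M := Module.compHom M (algebraMap K[X] Λ)
  have : IsScalarTower K[X] Λ M := .of_algebraMap_smul fun _ _ => rfl
  exact exists_equiv_pi_aux hΛ hn hE _ hM le_rfl

end Classification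

theorem crossing_comm {p q : ℕ × ℕ} : Crossing p q ↔ Crossing q p := by
  unfold Crossing
  omega

theorem _root_.IsSide.valid {p : ℕ × ℕ} (hn : 3 ≤ n) (hp : IsSide n p) :
    1 ≤ p.1 ∧ p.1 < p.2 ∧ p.2 ≤ n := by
  unfold IsSide at hp
  omega

theorem _root_.IsSide.not_crossing {p q : ℕ × ℕ} (hp : IsSide n p)
    (hq : 1 ≤ q.1 ∧ q.1 < q.2 ∧ q.2 ≤ n) : ¬ Crossing p q := by
  unfold IsSide at hp
  unfold Crossing
  omega

section DirectSums

variable {E : ℕ → ℕ → Submodule Λ (Fin n → RatFunc K)}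
  (hE : ∀ i j : ℕ, 1 ≤ i → i < j → j ≤ n →
      (E i j : Set (Fin n → RatFunc K)) = ijSet K n i j)
  {ι κ : Type} [Finite ι] [Finite κ] {q : ι → ℕ × ℕ} {p : κ → ℕ × ℕ}
  (hq : ∀ a, 1 ≤ (q a).1 ∧ (q a).1 < (q a).2 ∧ (q a).2 ≤ n)
  (hp : ∀ a, 1 ≤ (p a).1 ∧ (p a).1 < (p a).2 ∧ (p a).2 ≤ n)

theorem isRetract_of_eq {r s : ℕ × ℕ} (h : r = s) : IsRetract Λ (E r.1 r.2) (E s.1 s.2) := by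
  subst h
  exact .of_equiv (.refl Λ _)

include hΛ hn hE hq hp

theorem inAdd_pi_iff : InAdd Λ (∀ b, E (p b).1 (p b).2) (∀ a, E (q a).1 (q a).2) ↔
    ∀ a, ∃ b, p b = q a := by
  rw [inAdd_iff_isRetract]
  constructor
  · rintro ⟨m, h⟩ a
    have h1 : IsRetract Λ (E (q a).1 (q a).2) (∀ x : (_ : Fin m) × κ, E (p x.2).1 (p x.2).2) :=
      ((IsRetract.eval (P := fun a => ↥(E (q a).1 (q a).2)) a).trans h).trans
        (.of_equiv (LinearEquiv.piCurry Λ fun (_ : Fin m) b => ↥(E (p b).1 (p b).2)).symm)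
    obtain ⟨x, hx⟩ := exists_eq_of_isRetract hΛ hn hE (q := fun x : (_ : Fin m) × κ => p x.2)
      (fun x => hp x.2) (hq a) h1
    exact ⟨x.2, hx⟩
  · intro h
    choose b hb using h
    obtain ⟨m, ⟨e⟩⟩ := Finite.exists_equiv_fin ι
    refine ⟨m, (IsRetract.pi fun a => (isRetract_of_eq (hb a).symm).trans
      (IsRetract.eval (P := fun b => ↥(E (p b).1 (p b).2)) (b a))).trans
      (.of_equiv (LinearEquiv.funCongrLeft Λ _ e.symm))⟩

omit [Finite ι] in
theorem splitsExt_pi_iff :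
    SplitsExt Λ (∀ a, E (q a).1 (q a).2) (∀ b, E (p b).1 (p b).2) ↔
      ∀ a b, ¬ Crossing (q a) (p b) := by
  constructor
  · intro h a b hc
    exact not_splitsExt_of_crossing hΛ hn hE (hp b).1 (hp b).2.1 (hp b).2.2 (hq a).1 (hq a).2.1
      (hq a).2.2 (crossing_comm.1 hc)
      (h.of_isRetract (IsRetract.eval (P := fun a => ↥(E (q a).1 (q a).2)) a)
        (IsRetract.eval (P := fun b => ↥(E (p b).1 (p b).2)) b))
  · intro h
    refine SplitsExt.pi_left fun a => SplitsExt.pi_right fun b => ?_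
    exact splitsExt_of_not_crossing hΛ hn hE (hp b).1 (hp b).2.1 (hp b).2.2 (hq a).1 (hq a).2.1
      (hq a).2.2 fun hc => h a b (crossing_comm.1 hc)

end DirectSums

section ClusterTilting

variable {E : ℕ → ℕ → Submodule Λ (Fin n → RatFunc K)}
  (hE : ∀ i j : ℕ, 1 ≤ i → i < j → j ≤ n →
      (E i j : Set (Fin n → RatFunc K)) = ijSet K n i j)

section Congr

variable {T T' Z Z' : Type} [AddCommGroup T] [Module Λ T] [AddCommGroup T'] [Module Λ T']
  [AddCommGroup Z] [Module Λ Z] [AddCommGroup Z'] [Module Λ Z']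

theorem inAdd_congr_left (e : T ≃ₗ[Λ] T') : InAdd Λ T Z ↔ InAdd Λ T' Z := by
  rw [inAdd_iff_isRetract, inAdd_iff_isRetract]
  exact exists_congr fun m => ⟨fun h => h.trans (.pi fun _ => .of_equiv e),
    fun h => h.trans (.pi fun _ => .of_equiv e.symm)⟩

theorem inAdd_congr_right (e : Z ≃ₗ[Λ] Z') : InAdd Λ T Z ↔ InAdd Λ T Z' := by
  rw [inAdd_iff_isRetract, inAdd_iff_isRetract]
  exact exists_congr fun m => ⟨fun h => (IsRetract.of_equiv e.symm).trans h,
    fun h => (IsRetract.of_equiv e).trans h⟩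

theorem splitsExt_congr_left (e : T ≃ₗ[Λ] T') : SplitsExt Λ T Z ↔ SplitsExt Λ T' Z :=
  ⟨fun h => h.of_isRetract (.of_equiv e.symm) (.of_equiv (.refl Λ Z)),
    fun h => h.of_isRetract (.of_equiv e) (.of_equiv (.refl Λ Z))⟩

theorem splitsExt_congr_right (e : Z ≃ₗ[Λ] Z') : SplitsExt Λ T Z ↔ SplitsExt Λ T Z' :=
  ⟨fun h => h.of_isRetract (.of_equiv (.refl Λ T)) (.of_equiv e.symm),
    fun h => h.of_isRetract (.of_equiv (.refl Λ T)) (.of_equiv e)⟩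

end Congr

include hΛ hn hE

theorem isClusterTilting_of_isTriangulation {σ : Finset (ℕ × ℕ)} (hσ : IsTriangulation n σ) :
    IsClusterTilting Λ (TModOf Λ E σ) := by
  obtain ⟨hval, -, hnc, hmax⟩ := hσ
  have hv : ∀ a : {x // x ∈ σ}, 1 ≤ a.1.1 ∧ a.1.1 < a.1.2 ∧ a.1.2 ≤ n := fun a => hval _ a.2
  refine ⟨isCMMod_pi_E hE (q := Subtype.val) hv, fun Z hZ => ?_⟩
  obtain ⟨ι, _, q, hq, ⟨e⟩⟩ := exists_equiv_pi hΛ hn hE hZ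
  have hadd := (inAdd_congr_right e).trans
    (inAdd_pi_iff hΛ hn hE hq hv)
  have key : InAdd Λ (TModOf Λ E σ) Z ↔ ∀ a, ∀ b : {x // x ∈ σ}, ¬ Crossing (q a) b.1 := by
    rw [hadd]
    refine forall_congr' fun a => ⟨?_, fun h => ?_⟩
    · rintro ⟨b, hb⟩ c
      rw [← hb]
      exact hnc _ b.2 _ c.2
    · exact ⟨⟨q a, hmax _ (hq a).1 (hq a).2.1 (hq a).2.2 fun r hr => h ⟨r, hr⟩⟩, rfl⟩
  constructor
  · rw [key]
    refine Iff.trans ?_ (splitsExt_congr_left (T' := ∀ a, E (q a).1 (q a).2) e).symm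
    exact (splitsExt_pi_iff hΛ hn hE hq hv).symm
  · rw [key, forall_comm]
    refine Iff.trans ?_ (splitsExt_congr_right (Z' := ∀ a, E (q a).1 (q a).2) e).symm
    refine Iff.trans ?_ (splitsExt_pi_iff hΛ hn hE hv hq).symm
    exact forall_congr' fun a => forall_congr' fun b => not_congr crossing_comm

theorem isBasic_pi {ι : Type} [Finite ι] {q : ι → ℕ × ℕ}
    (hq : ∀ a, 1 ≤ (q a).1 ∧ (q a).1 < (q a).2 ∧ (q a).2 ≤ n) (hinj : Function.Injective q) :
    IsBasic Λ (∀ a, E (q a).1 (q a).2) := by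
  rw [isBasic_iff]
  intro A hA h
  obtain ⟨i, p, hip⟩ := IsRetract.fst.trans h
  have hA' : IsCMMod Λ A := (isCMMod_pi_E hE hq).of_injective i
    (Function.LeftInverse.injective (LinearMap.congr_fun hip))
  obtain ⟨r, hr, hret⟩ := exists_isRetract hΛ hn hE hA'
  exact not_isRetract_prod_self hΛ hn hE hq hr hinj (hret.prod_self.trans h)

omit hΛ hn hE in
theorem injective_of_isBasic_pi {ι : Type} {q : ι → ℕ × ℕ}
    (hnt : ∀ a, Nontrivial (E (q a).1 (q a).2)) (h : IsBasic Λ (∀ a, E (q a).1 (q a).2)) :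
    Function.Injective q := by
  classical
  rw [isBasic_iff] at h
  intro a b hab
  by_contra hne
  refine h (ModuleCat.of Λ (E (q a).1 (q a).2)) (hnt a) ?_
  have h1 : IsRetract Λ (E (q a).1 (q a).2 × E (q b).1 (q b).2) (∀ a, E (q a).1 (q a).2) := by
    let P := fun a => ↥(E (q a).1 (q a).2)
    refine ⟨(LinearMap.single Λ P a).coprod (LinearMap.single Λ P b),
      (LinearMap.proj a).prod (LinearMap.proj b), LinearMap.ext fun x => Prod.ext ?_ ?_⟩
    · simp [P, hne, Ne.symm hne]
    · simp [P, hne, Ne.symm hne]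
  obtain ⟨i, p, hip⟩ := isRetract_of_eq (E := E) hab
  have h2 : IsRetract Λ (E (q a).1 (q a).2 × E (q a).1 (q a).2)
      (E (q a).1 (q a).2 × E (q b).1 (q b).2) :=
    ⟨LinearMap.id.prodMap i, LinearMap.id.prodMap p,
      LinearMap.ext fun x => Prod.ext rfl (LinearMap.congr_fun hip x.2)⟩
  exact h2.trans h1

theorem subset_of_equiv {σ τ : Finset (ℕ × ℕ)} (hσ : IsTriangulation n σ)
    (hτ : IsTriangulation n τ) (e : TModOf Λ E σ ≃ₗ[Λ] TModOf Λ E τ) : σ ⊆ τ := by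
  intro p hp
  obtain ⟨b, hb⟩ := exists_eq_of_isRetract hΛ hn hE (q := fun b : {x // x ∈ τ} => b.1)
    (fun b => hτ.1 _ b.2) (hσ.1 p hp)
    ((IsRetract.eval (P := fun a : {x // x ∈ σ} => ↥(E a.1.1 a.1.2)) ⟨p, hp⟩).trans (.of_equiv e))
  exact hb ▸ b.2

theorem exists_isTriangulation {M : Type} [AddCommGroup M] [Module Λ M]
    (hM : IsClusterTilting Λ M) (hb : IsBasic Λ M) :
    ∃ σ : Finset (ℕ × ℕ), IsTriangulation n σ ∧ Nonempty (M ≃ₗ[Λ] TModOf Λ E σ) := by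
  classical
  obtain ⟨hCM, hct⟩ := hM
  obtain ⟨ι, _, q, hq, ⟨e⟩⟩ := exists_equiv_pi hΛ hn hE hCM
  have := Fintype.ofFinite ι
  have hinj : Function.Injective q := by
    refine injective_of_isBasic_pi
      (fun a => nontrivial_E hn hE (hq a).1 (hq a).2.1 (hq a).2.2) (isBasic_iff.2 fun A hA h => ?_)
    exact isBasic_iff.1 hb A hA (h.trans (.of_equiv e.symm))
  have hnc : ∀ a b, ¬ Crossing (q a) (q b) := by
    refine (splitsExt_pi_iff hΛ hn hE hq hq).1 ((splitsExt_congr_left e).1 ((splitsExt_congr_right e).1 ?_))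
    exact (hct (ModuleCat.of Λ M) hCM).1.1
      ((inAdd_congr_left e).2 ((inAdd_congr_right e).2
        ((inAdd_pi_iff hΛ hn hE hq hq).2 fun a => ⟨a, rfl⟩)))
  have hmax : ∀ p : ℕ × ℕ, 1 ≤ p.1 ∧ p.1 < p.2 ∧ p.2 ≤ n → (∀ a, ¬ Crossing p (q a)) →
      ∃ a, q a = p := by
    intro p hp hc
    have hv : ∀ _ : Unit, 1 ≤ p.1 ∧ p.1 < p.2 ∧ p.2 ≤ n := fun _ => hp
    have h1 := (hct (ModuleCat.of Λ (Unit → E p.1 p.2)) (isCMMod_pi_E hE hv)).1.2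
      ((splitsExt_congr_right e).2
        ((splitsExt_pi_iff hΛ hn hE hv hq).2 fun _ => hc))
    exact (inAdd_pi_iff hΛ hn hE hv hq).1
      ((inAdd_congr_left e).1 h1) ()
  have hmem : ∀ p, p ∈ Finset.univ.image q ↔ ∃ a, q a = p := fun p => by simp
  refine ⟨Finset.univ.image q, ⟨?_, ?_, ?_, ?_⟩, ⟨?_⟩⟩
  · intro p hp
    obtain ⟨a, rfl⟩ := (hmem p).1 hp
    exact hq a
  · exact fun p hp => (hmem p).2 (hmax p (hp.valid hn) fun a => hp.not_crossing (hq a))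
  · intro p hp r hr
    obtain ⟨a, rfl⟩ := (hmem p).1 hp
    obtain ⟨b, rfl⟩ := (hmem r).1 hr
    exact hnc a b
  · exact fun p h1 h2 h3 h4 => (hmem p).2
      (hmax p ⟨h1, h2, h3⟩ fun a => h4 _ ((hmem _).2 ⟨a, rfl⟩))
  · let f : ι ≃ {x // x ∈ Finset.univ.image q} :=
      Equiv.ofBijective (fun a => ⟨q a, (hmem _).2 ⟨a, rfl⟩⟩)
        ⟨fun a b h => hinj (congrArg Subtype.val h), fun p => by
          obtain ⟨a, ha⟩ := (hmem p.1).1 p.2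
          exact ⟨a, Subtype.ext ha⟩⟩
    exact e.trans (LinearEquiv.piCongrLeft Λ
      (fun x : {x // x ∈ Finset.univ.image q} => ↥(E x.1.1 x.1.2)) f)

end ClusterTilting

end Order

end PolygonOrder

/-- The assignment `σ ↦ T_σ` is a bijection between triangulations of the convex `n`-gon and
isomorphism classes of basic cluster tilting objects of `CM(Λ)`. -/
theorem statement10 (K : Type) [Field K] (n : ℕ) (hn : 3 ≤ n)
    (Λ : Subalgebra (Polynomial K) (Matrix (Fin n) (Fin n) (RatFunc K)))
    (hΛ : (Λ : Set (Matrix (Fin n) (Fin n) (RatFunc K))) = lambdaCarrier K n)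
    (E : ℕ → ℕ → Submodule ↥Λ (Fin n → RatFunc K))
    (hE : ∀ i j : ℕ, 1 ≤ i → i < j → j ≤ n →
      (E i j : Set (Fin n → RatFunc K)) = ijSet K n i j) :
    (∀ σ : Finset (ℕ × ℕ), IsTriangulation n σ →
      IsClusterTilting Λ (TModOf Λ E σ) ∧ IsBasic Λ (TModOf Λ E σ)) ∧
    (∀ σ τ : Finset (ℕ × ℕ), IsTriangulation n σ → IsTriangulation n τ →
      Nonempty ((TModOf Λ E σ) ≃ₗ[↥Λ] (TModOf Λ E τ)) → σ = τ) ∧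
    (∀ M : ModuleCat.{0} ↥Λ, IsClusterTilting Λ M → IsBasic Λ M →
      ∃ σ : Finset (ℕ × ℕ), IsTriangulation n σ ∧
        Nonempty (M ≃ₗ[↥Λ] (TModOf Λ E σ))) := by
  refine ⟨fun σ hσ => ⟨?_, ?_⟩, fun σ τ hσ hτ => ?_, fun M hM hb => ?_⟩
  · exact PolygonOrder.isClusterTilting_of_isTriangulation hΛ hn hE hσ
  · exact PolygonOrder.isBasic_pi hΛ hn hE (fun a : {x // x ∈ σ} => hσ.1 _ a.2)
      Subtype.val_injective
  · rintro ⟨e⟩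
    exact Finset.Subset.antisymm (PolygonOrder.subset_of_equiv hΛ hn hE hσ hτ e)
      (PolygonOrder.subset_of_equiv hΛ hn hE hτ hσ e.symm)
  · exact PolygonOrder.exists_isTriangulation hΛ hn hE hM hb
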